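/- arXiv:2410.19270 — 6 statements merged into one kernel-verified Lean document; each statement's English description precedes it below -/
import Mathlib

section
/- Let H be a complex separable infinite-dimensional Hilbert space and let N ⊆ T(H) be a linear subspace of trace-zero trace-class operators that is self-adjoint (X ∈ N implies X* ∈ N) and closed in the trace norm. Then there exists a strongly entanglement breaking quantum channel Φ: T(H) → T(H) such that null(Φ) = N, where null(Φ) := {X ∈ T(H) : Φ(X) = 0}. -/
noncomputable section

open scoped ComplexInnerProductSpace
open ContinuousLinearMap Filter Topology

/-- The rank-one operator `u v*`, i.e. `x ↦ ⟪v, x⟫ • u`. -/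
def rankOne {H K : Type*} [NormedAddCommGroup H] [InnerProductSpace ℂ H]
    [NormedAddCommGroup K] [InnerProductSpace ℂ K] (u : K) (v : H) : H →L[ℂ] K :=
  (ContinuousLinearMap.toSpanSingleton ℂ u).comp (innerSL ℂ v)

/-- An operator is trace class iff the sums `∑ |⟪f i, T (e i)⟫|` over finite orthonormal
families are uniformly bounded (the supremum being the trace norm). -/
def IsTraceClass {H K : Type*} [NormedAddCommGroup H] [InnerProductSpace ℂ H]
    [NormedAddCommGroup K] [InnerProductSpace ℂ K] (T : H →L[ℂ] K) : Prop :=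
  ∃ C : ℝ, ∀ (n : ℕ) (e : Fin n → H) (f : Fin n → K),
    Orthonormal ℂ e → Orthonormal ℂ f → (∑ i, ‖⟪f i, T (e i)⟫‖) ≤ C

/-- The trace norm of an operator. -/
def traceNorm {H K : Type*} [NormedAddCommGroup H] [InnerProductSpace ℂ H]
    [NormedAddCommGroup K] [InnerProductSpace ℂ K] (T : H →L[ℂ] K) : ℝ :=
  sSup { r : ℝ | ∃ (n : ℕ) (e : Fin n → H) (f : Fin n → K),
    Orthonormal ℂ e ∧ Orthonormal ℂ f ∧ r = ∑ i, ‖⟪f i, T (e i)⟫‖ }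

/-- A fixed Hilbert basis of a Hilbert space. -/
def stdONB (H : Type*) [NormedAddCommGroup H] [InnerProductSpace ℂ H] [CompleteSpace H] :
    HilbertBasis (exists_hilbertBasis ℂ H).choose ℂ H :=
  (exists_hilbertBasis ℂ H).choose_spec.choose

/-- The trace of a (trace-class) operator. -/
def Tr {H : Type*} [NormedAddCommGroup H] [InnerProductSpace ℂ H] [CompleteSpace H]
    (T : H →L[ℂ] H) : ℂ :=
  ∑' i, ⟪stdONB H i, T (stdONB H i)⟫

/-- Convergence of a series of operators in trace norm. -/
def HasSumTN {H K : Type*} [NormedAddCommGroup H] [InnerProductSpace ℂ H]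
    [NormedAddCommGroup K] [InnerProductSpace ℂ K] {ι : Type*}
    (f : ι → (H →L[ℂ] K)) (T : H →L[ℂ] K) : Prop :=
  Filter.Tendsto (fun s : Finset ι => traceNorm (T - ∑ k ∈ s, f k)) Filter.atTop (nhds 0)

/-- A state: a positive trace-class operator with trace one. -/
def IsState {H : Type*} [NormedAddCommGroup H] [InnerProductSpace ℂ H] [CompleteSpace H]
    (ρ : H →L[ℂ] H) : Prop :=
  IsTraceClass ρ ∧ ρ.IsPositive ∧ Tr ρ = 1

/-- Positivity of a finite matrix of operators, viewed as a block operator. -/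
def MatPos {H : Type*} [NormedAddCommGroup H] [InnerProductSpace ℂ H] {n : ℕ}
    (M : Fin n → Fin n → (H →L[ℂ] H)) : Prop :=
  ∀ x : Fin n → H,
    0 ≤ (∑ i, ∑ j, ⟪x i, M i j (x j)⟫).re ∧ (∑ i, ∑ j, ⟪x i, M i j (x j)⟫).im = 0

/-- Complete positivity of a linear map on trace-class operators. -/
def IsCompletelyPositive {H K : Type*} [NormedAddCommGroup H] [InnerProductSpace ℂ H]
    [NormedAddCommGroup K] [InnerProductSpace ℂ K]
    (Φ : (H →L[ℂ] H) →ₗ[ℂ] (K →L[ℂ] K)) : Prop :=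
  ∀ (n : ℕ) (M : Fin n → Fin n → (H →L[ℂ] H)),
    (∀ i j, IsTraceClass (M i j)) → MatPos M → MatPos fun i j => Φ (M i j)

/-- A quantum channel: a completely positive trace-preserving linear map on
trace-class operators. -/
structure IsChannel {H K : Type*} [NormedAddCommGroup H] [InnerProductSpace ℂ H]
    [CompleteSpace H] [NormedAddCommGroup K] [InnerProductSpace ℂ K] [CompleteSpace K]
    (Φ : (H →L[ℂ] H) →ₗ[ℂ] (K →L[ℂ] K)) : Prop where
  maps_traceClass : ∀ X : H →L[ℂ] H, IsTraceClass X → IsTraceClass (Φ X)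
  completelyPositive : IsCompletelyPositive Φ
  tracePreserving : ∀ X : H →L[ℂ] H, IsTraceClass X → Tr (Φ X) = Tr X

/-- Strongly entanglement breaking channel: admits a Holevo (measure-and-prepare) form
`Φ(X) = ∑ₖ Tr(Fₖ X) Rₖ` with states `Rₖ` and positive `Fₖ` with `∑ₖ Fₖ = I` (SOT). -/
def IsSEB {H K : Type*} [NormedAddCommGroup H] [InnerProductSpace ℂ H] [CompleteSpace H]
    [NormedAddCommGroup K] [InnerProductSpace ℂ K] [CompleteSpace K]
    (Φ : (H →L[ℂ] H) →ₗ[ℂ] (K →L[ℂ] K)) : Prop :=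
  ∃ (R : ℕ → (K →L[ℂ] K)) (F : ℕ → (H →L[ℂ] H)),
    (∀ k, IsState (R k)) ∧ (∀ k, (F k).IsPositive) ∧
    (∀ x : H, HasSum (fun k => F k x) x) ∧
    ∀ X : H →L[ℂ] H, IsTraceClass X → HasSumTN (fun k => Tr (F k * X) • R k) (Φ X)

/-- The weak* topology on `B(H)`, induced by the pairing with trace-class operators. -/
def weakStarTopology (H : Type*) [NormedAddCommGroup H] [InnerProductSpace ℂ H]
    [CompleteSpace H] : TopologicalSpace (H →L[ℂ] H) :=
  TopologicalSpace.induced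
    (fun Y => fun X : { X : H →L[ℂ] H // IsTraceClass X } => Tr ((X : H →L[ℂ] H) * Y))
    inferInstance



section basics
variable {H : Type*} [NormedAddCommGroup H] [InnerProductSpace ℂ H]

/-- `C` bounds all the sums defining the trace norm of `T`. -/
def TCBound (T : H →L[ℂ] H) (C : ℝ) : Prop :=
  ∀ (n : ℕ) (e : Fin n → H) (f : Fin n → H),
    Orthonormal ℂ e → Orthonormal ℂ f → (∑ i, ‖⟪f i, T (e i)⟫‖) ≤ C

lemma TCBound.tc {T : H →L[ℂ] H} {C : ℝ} (h : TCBound T C) : IsTraceClass T := ⟨C, h⟩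

lemma TCBound.nonneg {T : H →L[ℂ] H} {C : ℝ} (h : TCBound T C) : 0 ≤ C := by
  simpa using h 0 (fun i => i.elim0) (fun i => i.elim0)
    ⟨fun i => i.elim0, fun i => i.elim0⟩ ⟨fun i => i.elim0, fun i => i.elim0⟩

lemma TCBound.traceNorm_le {T : H →L[ℂ] H} {C : ℝ} (h : TCBound T C) : traceNorm T ≤ C := by
  apply Real.sSup_le _ h.nonneg
  rintro r ⟨n, e, f, he, hf, rfl⟩
  exact h n e f he hf

lemma tcBound_traceNorm {T : H →L[ℂ] H} (h : IsTraceClass T) : TCBound T (traceNorm T) := by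
  obtain ⟨C, hC⟩ := h
  intro n e f he hf
  apply le_csSup
  · refine ⟨C, ?_⟩
    rintro r ⟨n, e, f, he, hf, rfl⟩
    exact hC n e f he hf
  · exact ⟨n, e, f, he, hf, rfl⟩

lemma traceNorm_nonneg' (T : H →L[ℂ] H) : 0 ≤ traceNorm T := by
  apply Real.sSup_nonneg
  rintro r ⟨n, e, f, he, hf, rfl⟩
  positivity

lemma TCBound.add {S T : H →L[ℂ] H} {C D : ℝ} (hS : TCBound S C) (hT : TCBound T D) :
    TCBound (S + T) (C + D) := by
  intro n e f he hf
  calc _ ≤ ∑ i, (‖⟪f i, S (e i)⟫‖ + ‖⟪f i, T (e i)⟫‖) := by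
        refine Finset.sum_le_sum fun i _ => ?_
        rw [add_apply, inner_add_right]
        exact norm_add_le _ _
    _ ≤ _ := by
        rw [Finset.sum_add_distrib]
        exact add_le_add (hS n e f he hf) (hT n e f he hf)

lemma TCBound.smul {T : H →L[ℂ] H} {C : ℝ} (hT : TCBound T C) (c : ℂ) :
    TCBound (c • T) (‖c‖ * C) := by
  intro n e f he hf
  simp only [smul_apply, inner_smul_right, norm_mul, ← Finset.mul_sum]
  exact mul_le_mul_of_nonneg_left (hT n e f he hf) (norm_nonneg _)

lemma tcBound_zero : TCBound (0 : H →L[ℂ] H) 0 := by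
  intro n e f he hf
  simp

lemma TCBound.inner_le {T : H →L[ℂ] H} {C : ℝ} (hT : TCBound T C) (x y : H) :
    ‖⟪y, T x⟫‖ ≤ C * ‖x‖ * ‖y‖ := by
  by_cases hx : x = 0
  · simp [hx]
  by_cases hy : y = 0
  · simp [hy]
  have hx' : ‖x‖ ≠ 0 := norm_ne_zero_iff.2 hx
  have hy' : ‖y‖ ≠ 0 := norm_ne_zero_iff.2 hy
  have h := hT 1 (fun _ => ((‖x‖⁻¹ : ℝ) : ℂ) • x) (fun _ => ((‖y‖⁻¹ : ℝ) : ℂ) • y)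
    ⟨fun _ => by simp [norm_smul, hx'], fun i j hij => (hij (Subsingleton.elim _ _)).elim⟩
    ⟨fun _ => by simp [norm_smul, hy'], fun i j hij => (hij (Subsingleton.elim _ _)).elim⟩
  simp only [Finset.univ_unique, Finset.sum_singleton, map_smul, inner_smul_left, inner_smul_right,
    norm_mul, Complex.norm_real, norm_inv, norm_norm, RCLike.norm_conj] at h
  have hpos : 0 < ‖x‖ * ‖y‖ := by positivity
  have : ‖⟪y, T x⟫‖ = (‖x‖⁻¹ * (‖y‖⁻¹ * ‖⟪y, T x⟫‖)) * (‖x‖ * ‖y‖) := by field_simp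
  rw [this, mul_assoc C]
  refine mul_le_mul_of_nonneg_right ?_ hpos.le
  convert h using 1
  try ring

lemma TCBound.norm_le {T : H →L[ℂ] H} {C : ℝ} (hT : TCBound T C) : ‖T‖ ≤ C := by
  apply T.opNorm_le_bound hT.nonneg
  intro x
  by_cases h : T x = 0
  · rw [h]; simpa using mul_nonneg hT.nonneg (norm_nonneg x)
  have h1 := hT.inner_le x (T x)
  rw [inner_self_eq_norm_sq_to_K] at h1
  have hp : 0 < ‖T x‖ := norm_pos_iff.2 h
  have h2 : ‖T x‖ * ‖T x‖ ≤ C * ‖x‖ * ‖T x‖ := by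
    simpa [pow_two] using h1
  exact le_of_mul_le_mul_right h2 hp

lemma bessel_fin {n : ℕ} {e : Fin n → H} (he : Orthonormal ℂ e) (v : H) :
    ∑ i, ‖⟪e i, v⟫‖ ^ 2 ≤ ‖v‖ ^ 2 := by
  simpa using he.sum_inner_products_le v (s := Finset.univ)

@[simp] lemma rankOne_apply' (u v x : H) : rankOne u v x = ⟪v, x⟫ • u := by
  simp [rankOne]

lemma tcBound_rankOne (u v : H) : TCBound (rankOne u v) (‖u‖ * ‖v‖) := by
  intro n e f he hf
  have h1 : ∑ i, ‖⟪f i, rankOne u v (e i)⟫‖ = ∑ i, ‖⟪f i, u⟫‖ * ‖⟪e i, v⟫‖ := by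
    refine Finset.sum_congr rfl fun i _ => ?_
    rw [rankOne_apply', inner_smul_right, norm_mul, norm_inner_symm v, mul_comm]
  rw [h1]
  refine (Real.sum_mul_le_sqrt_mul_sqrt _ _ _).trans ?_
  refine mul_le_mul ?_ ?_ (Real.sqrt_nonneg _) (norm_nonneg _)
  · exact Real.sqrt_le_iff.2 ⟨norm_nonneg _, bessel_fin hf u⟩
  · exact Real.sqrt_le_iff.2 ⟨norm_nonneg _, bessel_fin he v⟩

variable (H) in
/-- The submodule of trace class operators. -/
def tcSub : Submodule ℂ (H →L[ℂ] H) where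
  carrier := {T | IsTraceClass T}
  zero_mem' := tcBound_zero.tc
  add_mem' := by
    intro a b ha hb
    exact ((tcBound_traceNorm ha).add (tcBound_traceNorm hb)).tc
  smul_mem' := by
    intro c a ha
    exact ((tcBound_traceNorm ha).smul c).tc

variable (H) in
/-- Type copy of the trace class operators, to be normed by the trace norm. -/
def TC : Type _ := tcSub H

instance : AddCommGroup (TC H) := inferInstanceAs (AddCommGroup (tcSub H))
instance : Module ℂ (TC H) := inferInstanceAs (Module ℂ (tcSub H))

/-- The underlying operator. -/
def TC.op : TC H →ₗ[ℂ] (H →L[ℂ] H) := (tcSub H).subtype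

/-- Build an element. -/
def TC.mk (X : H →L[ℂ] H) (h : IsTraceClass X) : TC H := ⟨X, h⟩

@[simp] lemma TC.op_mk (X : H →L[ℂ] H) (h : IsTraceClass X) : (TC.mk X h).op = X := rfl
lemma TC.tc (X : TC H) : IsTraceClass X.op := X.2
lemma TC.ext {X Y : TC H} (h : X.op = Y.op) : X = Y := Subtype.ext h

instance : Norm (TC H) := ⟨fun X => traceNorm X.op⟩
lemma TC.norm_def (X : TC H) : ‖X‖ = traceNorm X.op := rfl

lemma TC.bound (X : TC H) : TCBound X.op ‖X‖ := tcBound_traceNorm X.tc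

lemma TC.core : NormedSpace.Core ℂ (TC H) where
  norm_nonneg X := traceNorm_nonneg' _
  norm_smul c X := by
    have h1 : ∀ (c : ℂ) (X : TC H), ‖c • X‖ ≤ ‖c‖ * ‖X‖ := by
      intro c X
      have := (X.bound.smul c).traceNorm_le
      rwa [TC.norm_def, map_smul]
    refine le_antisymm (h1 c X) ?_
    by_cases hc : c = 0
    · simp only [hc, norm_zero, zero_mul]; exact traceNorm_nonneg' _
    · have h2 := h1 c⁻¹ (c • X)
      rw [smul_smul, inv_mul_cancel₀ hc, one_smul, norm_inv] at h2
      have hp : 0 < ‖c‖ := norm_pos_iff.2 hc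
      calc ‖c‖ * ‖X‖ ≤ ‖c‖ * (‖c‖⁻¹ * ‖c • X‖) := mul_le_mul_of_nonneg_left h2 hp.le
        _ = ‖c • X‖ := by rw [← mul_assoc, mul_inv_cancel₀ hp.ne', one_mul]
  norm_triangle X Y := by
    have := (X.bound.add Y.bound).traceNorm_le
    rwa [TC.norm_def, map_add]
  norm_eq_zero_iff X := by
    constructor
    · intro h
      have := X.bound.norm_le
      rw [h] at this
      apply TC.ext
      rw [map_zero]
      exact norm_le_zero_iff.1 this
    · rintro rfl
      refine le_antisymm ?_ (traceNorm_nonneg' _)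
      rw [TC.norm_def, map_zero]
      exact tcBound_zero.traceNorm_le

instance : NormedAddCommGroup (TC H) := NormedAddCommGroup.ofCore TC.core
instance : NormedSpace ℂ (TC H) := NormedSpace.ofCore TC.core

lemma TC.norm_eq (X : TC H) : ‖X‖ = traceNorm X.op := rfl

lemma TCBound.norm_mk_le {T : H →L[ℂ] H} {C : ℝ} (h : TCBound T C) : ‖TC.mk T h.tc‖ ≤ C :=
  h.traceNorm_le

end basics

section keylemma
variable {H : Type*} [NormedAddCommGroup H] [InnerProductSpace ℂ H] [CompleteSpace H]

lemma exists_orthonormal_nat (hinf : ¬ FiniteDimensional ℂ H) :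
    ∃ g : ℕ → H, Orthonormal ℂ g := by
  obtain ⟨w, b, hb⟩ := exists_hilbertBasis ℂ H
  have : Infinite w := by
    by_contra hw
    have : Finite w := not_infinite_iff_finite.1 hw
    have : Fintype w := Fintype.ofFinite w
    exact hinf b.toOrthonormalBasis.toBasis.finiteDimensional_of_finite
  let φ := Infinite.natEmbedding w
  exact ⟨fun n => b (φ n), b.orthonormal.comp φ φ.injective⟩

/-- A family with Gram matrix at most one. -/
def Contr {n : ℕ} (a : Fin n → H) : Prop :=
  ∀ c : Fin n → ℂ, ‖∑ i, c i • a i‖ ^ 2 ≤ ∑ i, ‖c i‖ ^ 2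

lemma norm_sum_orthonormal {n : ℕ} {e : Fin n → H} (he : Orthonormal ℂ e) (c : Fin n → ℂ) :
    ‖∑ i, c i • e i‖ ^ 2 = ∑ i, ‖c i‖ ^ 2 := by
  have h := he.inner_sum c c Finset.univ
  rw [inner_self_eq_norm_sq_to_K] at h
  have h2 : ((‖∑ i, c i • e i‖ ^ 2 : ℝ) : ℂ) = ((∑ i, ‖c i‖ ^ 2 : ℝ) : ℂ) := by
    push_cast
    simp only [Complex.coe_algebraMap] at h
    rw [h]
    refine Finset.sum_congr rfl fun i _ => ?_
    rw [mul_comm, Complex.mul_conj, Complex.normSq_eq_norm_sq]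
    push_cast; rfl
  exact_mod_cast h2

lemma contr_map {K : Type*} [NormedAddCommGroup K] [InnerProductSpace ℂ K] [CompleteSpace K]
    {n : ℕ} {e : Fin n → H} (he : Orthonormal ℂ e) (A : H →L[ℂ] K)
    (hA : ‖A‖ ≤ 1) : Contr fun i => A (e i) := by
  intro c
  rw [← norm_sum_orthonormal he c]
  have : ∑ i, c i • A (e i) = A (∑ i, c i • e i) := by simp
  rw [this]
  have h1 : ‖A (∑ i, c i • e i)‖ ≤ ‖∑ i, c i • e i‖ :=
    (A.le_of_opNorm_le hA _).trans (one_mul _).le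
  gcongr

lemma contr_decomp (hinf : ¬ FiniteDimensional ℂ H) {n : ℕ} {a : Fin n → H} (ha : Contr a) :
    ∃ (c : Fin 4 → ℂ) (e : Fin 4 → Fin n → H), (∀ j, ‖c j‖ ≤ 1 / 2) ∧
      (∀ j, Orthonormal ℂ (e j)) ∧ ∀ i, a i = ∑ j, c j • e j i := by
  obtain ⟨g, hg⟩ := exists_orthonormal_nat hinf
  have hg' : Orthonormal ℂ fun i : Fin n => g i := hg.comp _ Fin.val_injective
  let C : H →L[ℂ] H := ∑ i : Fin n, rankOne (a i) (g i)
  have hCx : ∀ x, C x = ∑ i : Fin n, ⟪g i, x⟫ • a i := by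
    intro x; simp [C]
  have hC : ‖C‖ ≤ 1 := by
    refine C.opNorm_le_bound zero_le_one fun x => ?_
    rw [one_mul, hCx]
    refine le_of_sq_le_sq ?_ (norm_nonneg x)
    exact (ha _).trans (bessel_fin hg' x)
  obtain ⟨u, c, hC2, hc⟩ := CStarAlgebra.exists_sum_four_unitary C
  refine ⟨c, fun j i => (u j : H →L[ℂ] H) (g i), fun j => (hc j).trans (by linarith), ?_, ?_⟩
  · intro j
    have := hg'.comp_linearIsometry (Unitary.linearIsometryEquiv (u j)).toLinearIsometry
    exact this
  · intro i
    have h1 : C (g i) = a i := by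
      rw [hCx]
      have := orthonormal_iff_ite.1 hg'
      simp [this]
    rw [← h1, hC2]
    simp

lemma TCBound.contr (hinf : ¬ FiniteDimensional ℂ H) {T : H →L[ℂ] H} {C : ℝ} (hT : TCBound T C)
    {n : ℕ} {a b : Fin n → H} (ha : Contr a) (hb : Contr b) :
    ∑ i, ‖⟪b i, T (a i)⟫‖ ≤ 4 * C := by
  obtain ⟨c, e, hc, he, hac⟩ := contr_decomp hinf ha
  obtain ⟨d, f, hd, hf, hbd⟩ := contr_decomp hinf hb
  have h1 : ∀ i, ‖⟪b i, T (a i)⟫‖ ≤ ∑ j, ∑ k, (1/4) * ‖⟪f k i, T (e j i)⟫‖ := by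
    intro i
    rw [hac, hbd, map_sum, inner_sum]
    refine (norm_sum_le _ _).trans (Finset.sum_le_sum fun j _ => ?_)
    rw [sum_inner]
    refine (norm_sum_le _ _).trans (Finset.sum_le_sum fun k _ => ?_)
    rw [map_smul, inner_smul_left, inner_smul_right, norm_mul, norm_mul, RCLike.norm_conj,
      ← mul_assoc]
    refine mul_le_mul_of_nonneg_right ?_ (norm_nonneg _)
    have := mul_le_mul (hd k) (hc j) (norm_nonneg _) (by norm_num)
    linarith
  calc _ ≤ ∑ i, ∑ j, ∑ k, (1/4) * ‖⟪f k i, T (e j i)⟫‖ := Finset.sum_le_sum fun i _ => h1 i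
    _ = ∑ j, ∑ k, (1/4) * ∑ i, ‖⟪f k i, T (e j i)⟫‖ := by
        rw [Finset.sum_comm]
        refine Finset.sum_congr rfl fun j _ => ?_
        rw [Finset.sum_comm]
        refine Finset.sum_congr rfl fun k _ => ?_
        rw [Finset.mul_sum]
    _ ≤ ∑ j : Fin 4, ∑ k : Fin 4, (1/4) * C := by
        refine Finset.sum_le_sum fun j _ => Finset.sum_le_sum fun k _ => ?_
        exact mul_le_mul_of_nonneg_left (hT n _ _ (he j) (hf k)) (by norm_num)
    _ = 4 * C := by simp

lemma Orthonormal.contr {n : ℕ} {e : Fin n → H} (he : Orthonormal ℂ e) : Contr e :=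
  fun c => (norm_sum_orthonormal he c).le

lemma TCBound.mul_mul_of_le (hinf : ¬ FiniteDimensional ℂ H) {T : H →L[ℂ] H} {C : ℝ}
    (hT : TCBound T C) (A B : H →L[ℂ] H) (hA : ‖A‖ ≤ 1) (hB : ‖B‖ ≤ 1) :
    TCBound (A * T * B) (4 * C) := by
  intro n e f he hf
  have h := hT.contr hinf (contr_map he B hB)
    (contr_map hf (adjoint A) (by rwa [LinearIsometryEquiv.norm_map]))
  simpa [adjoint_inner_left] using h

lemma TCBound.mul_mul (hinf : ¬ FiniteDimensional ℂ H) {T : H →L[ℂ] H} {C : ℝ}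
    (hT : TCBound T C) (A B : H →L[ℂ] H) :
    TCBound (A * T * B) (4 * ‖A‖ * ‖B‖ * C) := by
  by_cases hA : A = 0
  · simpa [hA] using tcBound_zero
  by_cases hB : B = 0
  · simpa [hB] using tcBound_zero
  have hA' : (‖A‖ : ℂ) ≠ 0 := by simpa using hA
  have hB' : (‖B‖ : ℂ) ≠ 0 := by simpa using hB
  have h := (hT.mul_mul_of_le hinf ((‖A‖ : ℂ)⁻¹ • A) ((‖B‖ : ℂ)⁻¹ • B)
    (by simp [norm_smul, hA]) (by simp [norm_smul, hB])).smul (‖A‖ * ‖B‖ : ℂ)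
  convert h using 1
  · simp only [smul_mul_assoc, mul_smul_comm, smul_smul]
    rw [show (‖A‖ * ‖B‖ * ((‖B‖ : ℂ)⁻¹ * (‖A‖ : ℂ)⁻¹) : ℂ) = 1 by field_simp, one_smul]
  · simp; ring

end keylemma

section trace
variable {H : Type*} [NormedAddCommGroup H] [InnerProductSpace ℂ H] [CompleteSpace H]

lemma TCBound.finset_sum_le {T : H →L[ℂ] H} {C : ℝ} (hT : TCBound T C) {ι : Type*}
    {b : ι → H} (hb : Orthonormal ℂ b) (s : Finset ι) : ∑ i ∈ s, ‖⟪b i, T (b i)⟫‖ ≤ C := by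
  let φ := s.equivFin.symm
  have ho : Orthonormal ℂ fun j => b (φ j) :=
    hb.comp (fun j => (φ j : ι)) (Subtype.val_injective.comp φ.injective)
  have h := hT _ _ _ ho ho
  rw [← Finset.sum_coe_sort s, ← φ.sum_comp]
  exact h

lemma TCBound.summable {T : H →L[ℂ] H} {C : ℝ} (hT : TCBound T C) {ι : Type*}
    {b : ι → H} (hb : Orthonormal ℂ b) : Summable fun i => ‖⟪b i, T (b i)⟫‖ :=
  summable_of_sum_le (fun _ => norm_nonneg _) (hT.finset_sum_le hb)

lemma TCBound.norm_Tr_le {T : H →L[ℂ] H} {C : ℝ} (hT : TCBound T C) : ‖Tr T‖ ≤ C := by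
  refine (norm_tsum_le_tsum_norm (hT.summable (stdONB H).orthonormal)).trans ?_
  exact (hT.summable (stdONB H).orthonormal).tsum_le_of_sum_le
    (hT.finset_sum_le (stdONB H).orthonormal)

/-- The trace as a bounded functional on the trace class. -/
def trL : TC H →L[ℂ] ℂ :=
  LinearMap.mkContinuous
    { toFun := fun X => Tr X.op
      map_add' := by
        intro X Y
        have hX := (X.bound.summable (stdONB H).orthonormal).of_norm
        have hY := (Y.bound.summable (stdONB H).orthonormal).of_norm
        simp only [Tr]
        rw [← hX.tsum_add hY]
        simp [inner_add_right]
      map_smul' := by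
        intro c X
        simp only [Tr, map_smul, smul_apply, inner_smul_right, RingHom.id_apply, smul_eq_mul]
        rw [tsum_mul_left] } 1
    (fun X => by
      rw [one_mul]
      exact X.bound.norm_Tr_le)

@[simp] lemma trL_apply (X : TC H) : trL X = Tr X.op := rfl

lemma norm_one_le' : ‖(1 : H →L[ℂ] H)‖ ≤ 1 := norm_id_le

lemma TCBound.mul_left (hinf : ¬ FiniteDimensional ℂ H) {T : H →L[ℂ] H} {C : ℝ}
    (hT : TCBound T C) (A : H →L[ℂ] H) : TCBound (A * T) (4 * ‖A‖ * C) := by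
  intro n e f he hf
  have h := hT.mul_mul hinf A 1 n e f he hf
  rw [mul_one] at h
  refine h.trans (mul_le_mul_of_nonneg_right ?_ hT.nonneg)
  exact mul_le_of_le_one_right (by positivity) norm_one_le'

lemma TCBound.mul_right (hinf : ¬ FiniteDimensional ℂ H) {T : H →L[ℂ] H} {C : ℝ}
    (hT : TCBound T C) (A : H →L[ℂ] H) : TCBound (T * A) (4 * ‖A‖ * C) := by
  intro n e f he hf
  have h := hT.mul_mul hinf 1 A n e f he hf
  rw [one_mul] at h
  refine h.trans (mul_le_mul_of_nonneg_right ?_ hT.nonneg)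
  have : ‖(1 : H →L[ℂ] H)‖ ≤ 1 := norm_one_le'
  have h2 := norm_nonneg A
  nlinarith

/-- The pairing `(A, X) ↦ Tr (A X)`. -/
def tau (hinf : ¬ FiniteDimensional ℂ H) : (H →L[ℂ] H) →L[ℂ] TC H →L[ℂ] ℂ :=
  LinearMap.mkContinuous₂
    (LinearMap.mk₂ ℂ (fun A X => trL (TC.mk (A * X.op) (X.bound.mul_left hinf A).tc))
      (by intro A B X
          rw [← map_add]; refine congrArg trL (TC.ext ?_); simp [add_mul])
      (by intro c A X
          rw [← map_smul]; refine congrArg trL (TC.ext ?_); simp)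
      (by intro A X Y
          rw [← map_add]; refine congrArg trL (TC.ext ?_); simp [mul_add])
      (by intro c A X
          rw [← map_smul]; refine congrArg trL (TC.ext ?_); simp)) 4
    (fun A X => by
      exact (X.bound.mul_left hinf A).norm_Tr_le)

@[simp] lemma tau_apply (hinf : ¬ FiniteDimensional ℂ H) (A : H →L[ℂ] H) (X : TC H) :
    tau hinf A X = Tr (A * X.op) := rfl

/-- The functional `X ↦ Tr (X A)`. -/
def tauR (hinf : ¬ FiniteDimensional ℂ H) (A : H →L[ℂ] H) : TC H →L[ℂ] ℂ :=
  LinearMap.mkContinuous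
    { toFun := fun X => trL (TC.mk (X.op * A) (X.bound.mul_right hinf A).tc)
      map_add' := by
        intro X Y
        rw [← map_add]; refine congrArg trL (TC.ext ?_); simp [add_mul]
      map_smul' := by
        intro c X
        rw [RingHom.id_apply, ← map_smul]; refine congrArg trL (TC.ext ?_); simp } (4 * ‖A‖)
    (fun X => (X.bound.mul_right hinf A).norm_Tr_le)

@[simp] lemma tauR_apply (hinf : ¬ FiniteDimensional ℂ H) (A : H →L[ℂ] H) (X : TC H) :
    tauR hinf A X = Tr (X.op * A) := rfl

lemma Tr_rankOne (u v : H) : Tr (rankOne u v) = ⟪v, u⟫ := by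
  rw [Tr, ← (stdONB H).tsum_inner_mul_inner]
  refine tsum_congr fun i => ?_
  rw [rankOne_apply', inner_smul_right]

lemma mul_rankOne (A : H →L[ℂ] H) (u v : H) : A * rankOne u v = rankOne (A u) v := by
  ext x; simp

lemma rankOne_mul (A : H →L[ℂ] H) (u v : H) : rankOne u v * A = rankOne u (adjoint A v) := by
  ext x; simp [adjoint_inner_left]

/-- Rank one operators as a bounded sesquilinear map into the trace class. -/
def rkL : H →L⋆[ℂ] H →L[ℂ] TC H :=
  LinearMap.mkContinuous₂
    (LinearMap.mk₂'ₛₗ (starRingEnd ℂ) (RingHom.id ℂ)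
      (fun v u : H => TC.mk (rankOne u v) (tcBound_rankOne u v).tc)
      (by intro a b u; apply TC.ext; ext x; simp [inner_add_left, add_smul])
      (by intro c a u; apply TC.ext; ext x; simp [smul_smul, mul_comm])
      (by intro a b u; apply TC.ext; ext x; simp)
      (by intro c a u; apply TC.ext; ext x; simp [smul_smul, mul_comm])) 1
    (fun v u => by
      refine (tcBound_rankOne u v).norm_mk_le.trans ?_
      rw [one_mul, mul_comm])

@[simp] lemma rkL_op (v u : H) : (rkL v u).op = rankOne u v := rfl

end trace

section density
variable {H : Type*} [NormedAddCommGroup H] [InnerProductSpace ℂ H] [CompleteSpace H]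

lemma orthonormal_append {n m : ℕ} {e : Fin n → H} {e' : Fin m → H} (he : Orthonormal ℂ e)
    (he' : Orthonormal ℂ e') (h : ∀ i j, ⟪e i, e' j⟫ = 0) : Orthonormal ℂ (Fin.append e e') := by
  constructor
  · intro i
    refine Fin.addCases (fun i => ?_) (fun i => ?_) i
    · simpa using he.1 i
    · simpa using he'.1 i
  · intro i
    refine Fin.addCases (fun i => ?_) (fun i => ?_) i
    · intro j
      refine Fin.addCases (fun j => ?_) (fun j => ?_) j
      · intro hij
        simpa using he.2 (fun hh => hij (by rw [hh]))
      · intro _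
        simpa using h i j
    · intro j
      refine Fin.addCases (fun j => ?_) (fun j => ?_) j
      · intro _
        simpa using inner_eq_zero_symm.1 (h j i)
      · intro hij
        simpa using he'.2 (fun hh => hij (by rw [hh]))

lemma exists_compression (hinf : ¬ FiniteDimensional ℂ H) (X : TC H) {ε : ℝ} (hε : 0 < ε) :
    ∃ (M : Submodule ℂ H) (_ : FiniteDimensional ℂ M),
      TCBound (Mᗮ.starProjection * X.op * Mᗮ.starProjection) (4 * ε) := by
  have hlt : traceNorm X.op - ε < traceNorm X.op := by linarith
  have hne : { r : ℝ | ∃ (n : ℕ) (e : Fin n → H) (f : Fin n → H),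
      Orthonormal ℂ e ∧ Orthonormal ℂ f ∧ r = ∑ i, ‖⟪f i, X.op (e i)⟫‖ }.Nonempty :=
    ⟨_, 0, fun i => i.elim0, fun i => i.elim0, ⟨fun i => i.elim0, fun i => i.elim0⟩,
      ⟨fun i => i.elim0, fun i => i.elim0⟩, rfl⟩
  obtain ⟨r, ⟨n, e, f, he, hf, rfl⟩, hr⟩ := exists_lt_of_lt_csSup hne hlt
  let M : Submodule ℂ H := Submodule.span ℂ (Set.range e ∪ Set.range f)
  have hM : FiniteDimensional ℂ M :=
    FiniteDimensional.span_of_finite ℂ ((Set.finite_range e).union (Set.finite_range f))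
  refine ⟨M, hM, ?_⟩
  have hK : ¬ FiniteDimensional ℂ Mᗮ := by
    intro hK
    have h1 : FiniteDimensional ℂ (M ⊔ Mᗮ : Submodule ℂ H) := inferInstance
    rw [Submodule.sup_orthogonal_of_hasOrthogonalProjection] at h1
    exact hinf (Module.finite_def.2 (Module.Finite.iff_fg.1 h1))
  have heM : ∀ i, e i ∈ M := fun i => Submodule.subset_span (Or.inl ⟨i, rfl⟩)
  have hfM : ∀ i, f i ∈ M := fun i => Submodule.subset_span (Or.inr ⟨i, rfl⟩)
  let T : Mᗮ →L[ℂ] Mᗮ := Mᗮ.orthogonalProjectionOnto.comp (X.op.comp Mᗮ.subtypeL)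
  have h2 : ∀ x y : Mᗮ, ⟪x, T y⟫ = ⟪(x : H), X.op (y : H)⟫ := by
    intro x y
    simp [T]
  have hT : TCBound T ε := by
    intro m e' f' he' hf'
    have h1 := X.bound (n + m) (Fin.append e fun i => (e' i : H)) (Fin.append f fun i => (f' i : H))
      (orthonormal_append he (he'.comp_linearIsometry Mᗮ.subtypeₗᵢ)
        fun i j => (e' j).2 _ (heM i))
      (orthonormal_append hf (hf'.comp_linearIsometry Mᗮ.subtypeₗᵢ)
        fun i j => (f' j).2 _ (hfM i))
    rw [Fin.sum_univ_add] at h1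
    simp only [Fin.append_left, Fin.append_right] at h1
    simp only [h2]
    rw [TC.norm_eq] at h1
    linarith
  intro m e' f' he' hf'
  have h := hT.contr hK (contr_map he' _ Mᗮ.orthogonalProjectionOnto_norm_le)
    (contr_map hf' _ Mᗮ.orthogonalProjectionOnto_norm_le)
  refine le_trans (le_of_eq ?_) h
  refine Finset.sum_congr rfl fun i _ => ?_
  congr 1
  rw [h2]
  simp only [mul_apply_eq_comp]
  rw [← Submodule.inner_starProjection_left_eq_right]
  rfl

/-- The span of the rank one operators. -/
def frk : Submodule ℂ (TC H) := Submodule.span ℂ (Set.range fun p : H × H => rkL p.1 p.2)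

lemma rkL_mem (v u : H) : rkL v u ∈ (frk : Submodule ℂ (TC H)) :=
  Submodule.subset_span ⟨(v, u), rfl⟩

lemma frk_dense (hinf : ¬ FiniteDimensional ℂ H) : Dense ((frk : Submodule ℂ (TC H)) : Set (TC H)) := by
  rw [Metric.dense_iff]
  intro X r hr
  obtain ⟨M, hM, hb⟩ := exists_compression hinf X (ε := r / 8) (by positivity)
  let b := stdOrthonormalBasis ℂ M
  let P := Mᗮ.starProjection
  let Y : TC H := ∑ i, rkL (adjoint X.op (b i : H)) (b i : H) + ∑ i, rkL (b i : H) (P (X.op (b i)))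
  have hQ : ∀ x, M.starProjection x = ∑ i, ⟪(b i : H), x⟫ • (b i : H) := by
    intro x
    rw [OrthonormalBasis.starProjection_eq_sum_rankOne b]
    simp
  have hP : ∀ x, x = M.starProjection x + P x := by
    intro x
    have := Submodule.starProjection_orthogonal_val (K := M) x
    simp only [P, this]; abel
  refine ⟨Y, ?_, ?_⟩
  · rw [Metric.mem_ball, dist_comm, dist_eq_norm]
    have h1 : (X - Y).op = P * X.op * P := by
      ext x
      have hx : X.op x = M.starProjection (X.op x) + (P (X.op (M.starProjection x)) + P (X.op (P x))) := by
        rw [← map_add, ← map_add, ← hP, ← hP]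
      have hY : Y.op x = M.starProjection (X.op x) + P (X.op (M.starProjection x)) := by
        rw [hQ, hQ]
        simp [Y, adjoint_inner_left]
      rw [map_sub, sub_apply, hY]
      nth_rewrite 1 [hx]
      simp only [mul_apply_eq_comp]
      abel
    have h2 : TCBound (X - Y).op (4 * (r / 8)) := by rw [h1]; exact hb
    have := h2.traceNorm_le
    rw [TC.norm_eq]
    linarith
  · exact add_mem (sum_mem fun i _ => rkL_mem _ _) (sum_mem fun i _ => rkL_mem _ _)

lemma functional_ext (hinf : ¬ FiniteDimensional ℂ H) {f g : TC H →L[ℂ] ℂ}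
    (h : ∀ u v, f (rkL v u) = g (rkL v u)) : f = g := by
  refine ContinuousLinearMap.ext_on (frk_dense hinf) ?_
  rintro _ ⟨p, rfl⟩
  exact h _ _

lemma exists_rep (hinf : ¬ FiniteDimensional ℂ H) (f : TC H →L[ℂ] ℂ) :
    ∃ A : H →L[ℂ] H, f = tau hinf A := by
  let B : H →L⋆[ℂ] H →L[ℂ] ℂ := (compL ℂ H (TC H) ℂ f).comp rkL
  refine ⟨adjoint (InnerProductSpace.continuousLinearMapOfBilin B), functional_ext hinf ?_⟩
  intro u v
  rw [tau_apply, rkL_op, mul_rankOne, Tr_rankOne, adjoint_inner_right,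
    InnerProductSpace.continuousLinearMapOfBilin_apply]
  rfl

lemma Tr_comm (hinf : ¬ FiniteDimensional ℂ H) (A X : H →L[ℂ] H) (hX : IsTraceClass X) :
    Tr (A * X) = Tr (X * A) := by
  have h : tau hinf A = tauR hinf A := by
    refine functional_ext hinf fun u v => ?_
    rw [tau_apply, tauR_apply, rkL_op, mul_rankOne, rankOne_mul, Tr_rankOne, Tr_rankOne,
      adjoint_inner_left]
  exact congrArg (fun f => f (TC.mk X hX)) h

lemma Tr_adjoint (X : H →L[ℂ] H) : Tr (adjoint X) = starRingEnd ℂ (Tr X) := by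
  simp only [Tr]
  rw [Complex.conj_tsum]
  refine tsum_congr fun i => ?_
  rw [adjoint_inner_right, inner_conj_symm]

lemma separable_TC (hinf : ¬ FiniteDimensional ℂ H) [TopologicalSpace.SeparableSpace H] :
    TopologicalSpace.SeparableSpace (TC H) := by
  rw [← TopologicalSpace.isSeparable_univ_iff, ← (frk_dense hinf).closure_eq]
  refine TopologicalSpace.IsSeparable.closure ?_
  refine TopologicalSpace.IsSeparable.span ?_
  refine TopologicalSpace.isSeparable_range ?_
  fun_prop

lemma Tr_mul_nonneg (hinf : ¬ FiniteDimensional ℂ H) {F Z : H →L[ℂ] H} (hF : F.IsPositive)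
    (hZ : IsTraceClass Z) (hpos : ∀ x, 0 ≤ (⟪x, Z x⟫).re ∧ (⟪x, Z x⟫).im = 0) :
    0 ≤ (Tr (F * Z)).re ∧ (Tr (F * Z)).im = 0 := by
  have hF0 : 0 ≤ F := (nonneg_iff_isPositive F).2 hF
  let S := CFC.sqrt F
  have hS : S * S = F := CFC.sqrt_mul_sqrt_self F hF0
  have hSsa : adjoint S = S := ((nonneg_iff_isPositive S).1 (CFC.sqrt_nonneg F)).isSelfAdjoint
  have hSZ : IsTraceClass (S * Z) := ((tcBound_traceNorm hZ).mul_left hinf S).tc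
  have h1 : Tr (F * Z) = Tr (S * Z * S) := by
    rw [← hS, mul_assoc, Tr_comm hinf S _ hSZ]
  have h2 : Summable fun i => ⟪stdONB H i, (S * Z * S) (stdONB H i)⟫ :=
    (((tcBound_traceNorm hSZ).mul_right hinf S).summable (stdONB H).orthonormal).of_norm
  have h3 : ∀ i, ⟪stdONB H i, (S * Z * S) (stdONB H i)⟫
      = ⟪S (stdONB H i), Z (S (stdONB H i))⟫ := by
    intro i
    rw [← adjoint_inner_right, hSsa]; rfl
  rw [h1, Tr, Complex.re_tsum h2, Complex.im_tsum h2]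
  constructor
  · exact tsum_nonneg fun i => by rw [h3]; exact (hpos _).1
  · convert tsum_zero with i
    rw [h3]; exact (hpos _).2

end density

lemma HasSum.congr_both {ι E : Type*} [AddCommMonoid E] [TopologicalSpace E] {f f' : ι → E}
    {a a' : E} (h : HasSum f a) (hf : ∀ k, f' k = f k) (ha : a' = a) : HasSum f' a' := by
  rw [ha, funext hf]
  exact h

section separating
variable {H : Type*} [NormedAddCommGroup H] [InnerProductSpace ℂ H] [CompleteSpace H]

lemma exists_functionals {E : Type*} [NormedAddCommGroup E] [NormedSpace ℂ E]
    [TopologicalSpace.SeparableSpace E] (N : Submodule ℂ E) (hN : IsClosed (N : Set E)) :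
    ∃ f : ℕ → E →L[ℂ] ℂ, ∀ x, x ∈ N ↔ ∀ k, f k x = 0 := by
  have hcl : IsClosed (N : Set E) := hN
  let d := TopologicalSpace.denseSeq E
  have hg : ∀ k, ∃ g : StrongDual ℂ (E ⧸ N), ‖g‖ ≤ 1 ∧ g (N.mkQ (d k)) = ‖N.mkQ (d k)‖ :=
    fun k => exists_dual_vector'' ℂ (N.mkQ (d k))
  choose g hg1 hg2 using hg
  have hq : ∀ x, ‖N.mkQ x‖ ≤ ‖x‖ := fun x => Submodule.Quotient.norm_mk_le N x
  let q : E →L[ℂ] (E ⧸ N) := LinearMap.mkContinuous N.mkQ 1 (fun x => by simpa using hq x)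
  refine ⟨fun k => (g k).comp q, fun x => ⟨fun hx k => ?_, fun hx => ?_⟩⟩
  · have : q x = 0 := (Submodule.Quotient.mk_eq_zero N).2 hx
    simp [this]
  · have h1 : ∀ k, ‖q x‖ ≤ 2 * ‖d k - x‖ := by
      intro k
      have h2 : ‖q (d k)‖ ≤ ‖d k - x‖ := by
        have h3 : g k (q (d k - x)) = ‖q (d k)‖ := by
          rw [map_sub, map_sub]
          have := hx k
          rw [ContinuousLinearMap.comp_apply] at this
          rw [this, sub_zero]
          exact hg2 k
        have h4 : ‖g k (q (d k - x))‖ ≤ ‖q (d k - x)‖ := by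
          simpa using (g k).le_of_opNorm_le (hg1 k) (q (d k - x))
        rw [h3] at h4
        simp only [Complex.norm_real, norm_norm] at h4
        exact h4.trans (hq _)
      have h5 : q x = q (d k) - q (d k - x) := by rw [← map_sub]; congr 1; abel
      rw [h5]
      refine (norm_sub_le _ _).trans ?_
      have := hq (d k - x)
      change ‖q (d k - x)‖ ≤ _ at this
      linarith
    have h6 : q x = 0 := by
      rw [← norm_le_zero_iff]
      refine le_of_forall_pos_le_add fun ε hε => ?_
      obtain ⟨k, hk⟩ := (TopologicalSpace.denseRange_denseSeq E).exists_dist_lt x (half_pos hε)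
      have := h1 k
      rw [dist_comm, dist_eq_norm] at hk
      simp only [d] at this
      linarith
    exact (Submodule.Quotient.mk_eq_zero N).1 h6

lemma exists_separating [TopologicalSpace.SeparableSpace H] (hinf : ¬ FiniteDimensional ℂ H)
    (N : Submodule ℂ (H →L[ℂ] H))
    (hN_tc : ∀ X ∈ N, IsTraceClass X)
    (hN_sa : ∀ X ∈ N, ContinuousLinearMap.adjoint X ∈ N)
    (hN_closed : ∀ X : H →L[ℂ] H, IsTraceClass X →
      (∀ ε : ℝ, 0 < ε → ∃ Y ∈ N, traceNorm (X - Y) < ε) → X ∈ N) :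
    ∃ A : ℕ → H →L[ℂ] H, (∀ k, IsSelfAdjoint (A k)) ∧ (∀ k, ‖A k‖ ≤ 1) ∧
      ∀ X : TC H, X.op ∈ N ↔ ∀ k, tau hinf (A k) X = 0 := by
  have := separable_TC hinf
  have hcl : IsClosed ((N.comap TC.op : Submodule ℂ (TC H)) : Set (TC H)) := by
    refine isClosed_of_closure_subset fun X hX => ?_
    refine hN_closed X.op X.tc fun ε hε => ?_
    obtain ⟨Y, hY, hd⟩ := Metric.mem_closure_iff.1 hX ε hε
    refine ⟨Y.op, hY, ?_⟩
    rwa [dist_eq_norm, TC.norm_eq, map_sub] at hd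
  obtain ⟨f, hf⟩ := exists_functionals _ hcl
  choose B hB using fun k => exists_rep hinf (f k)
  have hstar : ∀ X : TC H, X.op ∈ N → ∀ k, tau hinf (star (B k)) X = 0 := by
    intro X hX k
    have hX' := hN_sa _ hX
    have h0 := (hf (TC.mk _ (hN_tc _ hX'))).1 hX' k
    rw [hB, tau_apply, TC.op_mk, Tr_comm hinf _ _ (hN_tc _ hX')] at h0
    have h1 : star (B k) * X.op = adjoint (adjoint X.op * B k) := by
      change _ = star (star X.op * B k)
      rw [star_mul, star_star]
    rw [tau_apply, h1, Tr_adjoint, h0, map_zero]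
  let S : ℕ ⊕ ℕ → H →L[ℂ] H := Sum.elim (fun k => B k + star (B k))
    (fun k => Complex.I • (B k - star (B k)))
  have hS : ∀ j, IsSelfAdjoint (S j) := by
    rintro (k | k)
    · exact IsSelfAdjoint.add_star_self _
    · change star (Complex.I • (B k - star (B k))) = _
      rw [star_smul, star_sub, star_star]
      simp [S, ← smul_neg]
  let c : ℕ ⊕ ℕ → ℝ := fun j => (‖S j‖ + 1)⁻¹
  have hc : ∀ j, 0 < c j := fun j => by positivity
  let σ := Equiv.natSumNatEquivNat.symm
  refine ⟨fun k => (c (σ k) : ℂ) • S (σ k), fun k => ?_, fun k => ?_, fun X => ⟨?_, ?_⟩⟩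
  · refine IsSelfAdjoint.smul ?_ (hS _)
    exact Complex.conj_ofReal _
  · rw [norm_smul, Complex.norm_real, Real.norm_of_nonneg (hc _).le]
    simp only [c]
    rw [inv_mul_le_one₀ (by positivity)]
    linarith
  · intro hX k
    have hb : ∀ k, tau hinf (B k) X = 0 := fun k => by rw [← hB]; exact (hf X).1 hX k
    rw [map_smul, smul_apply]
    rcases σ k with j | j
    · simp only [S, Sum.elim_inl, map_add, add_apply, hb, hstar X hX, add_zero, smul_zero]
    · simp only [S, Sum.elim_inr, map_smul, map_sub, sub_apply, smul_apply, hb, hstar X hX,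
        sub_zero, smul_zero]
  · intro h
    refine (hf X).2 fun k => ?_
    have hz : ∀ j, tau hinf (S j) X = 0 := by
      intro j
      have := h (σ.symm j)
      simp only [] at this
      rw [Equiv.apply_symm_apply, map_smul, smul_apply, smul_eq_zero] at this
      refine this.resolve_left ?_
      exact_mod_cast (hc j).ne'
    have h1 := hz (Sum.inl k)
    have h2 := hz (Sum.inr k)
    simp only [S, Sum.elim_inl, Sum.elim_inr, map_add, map_smul, map_sub, add_apply, sub_apply,
      smul_apply, smul_eq_mul, mul_eq_zero, Complex.I_ne_zero, false_or] at h1 h2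
    rw [hB]
    linear_combination (h1 + h2) / 2

end separating

section channel
variable {H : Type*} [NormedAddCommGroup H] [InnerProductSpace ℂ H] [CompleteSpace H]

lemma isPositive_of_norm_le {B : H →L[ℂ] H} (hB : IsSelfAdjoint B) {r : ℝ} (hr : ‖B‖ ≤ r) :
    ((r : ℂ) • (1 : H →L[ℂ] H) + B).IsPositive := by
  rw [isPositive_def']
  constructor
  · refine IsSelfAdjoint.add (IsSelfAdjoint.smul (Complex.conj_ofReal _) (.one _)) hB
  · intro x
    rw [reApplyInnerSelf_apply, add_apply, inner_add_left, map_add]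
    have h1 : RCLike.re ⟪((r : ℂ) • (1 : H →L[ℂ] H)) x, x⟫ = r * ‖x‖ ^ 2 := by
      rw [smul_apply, inner_smul_left, one_apply_eq_self, inner_self_eq_norm_sq_to_K,
        Complex.conj_ofReal]
      simp [← Complex.ofReal_pow]
    have h2 : |RCLike.re ⟪B x, x⟫| ≤ r * ‖x‖ ^ 2 := by
      refine (RCLike.abs_re_le_norm _).trans ((norm_inner_le_norm _ _).trans ?_)
      have := B.le_of_opNorm_le hr x
      nlinarith [norm_nonneg x]
    rw [h1]
    linarith [neg_abs_le (RCLike.re ⟪B x, x⟫)]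

lemma tcBound_sum {ι : Type*} (s : Finset ι) (T : ι → H →L[ℂ] H) (C : ι → ℝ)
    (h : ∀ i, TCBound (T i) (C i)) : TCBound (∑ i ∈ s, T i) (∑ i ∈ s, C i) := by
  classical
  induction s using Finset.induction_on with
  | empty => simpa using tcBound_zero
  | insert a s ha ih =>
    rw [Finset.sum_insert ha, Finset.sum_insert ha]
    exact (h a).add ih

lemma tcBound_hasSum {ι : Type*} {R : ι → H →L[ℂ] H} (hR : ∀ i, TCBound (R i) 1) {a : ι → ℂ}
    (ha : Summable fun i => ‖a i‖) {T : H →L[ℂ] H} (hT : HasSum (fun i => a i • R i) T) :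
    TCBound T (∑' i, ‖a i‖) := by
  intro n e f he hf
  have hcont : Continuous fun S : H →L[ℂ] H => ∑ i, ‖⟪f i, S (e i)⟫‖ := by fun_prop
  have ht := (hcont.tendsto T).comp hT
  refine le_of_tendsto ht (Eventually.of_forall fun s => ?_)
  have h1 := tcBound_sum s (fun i => a i • R i) (fun i => ‖a i‖ * 1) (fun i => (hR i).smul (a i))
  refine (h1 n e f he hf).trans ?_
  simp only [mul_one]
  exact ha.sum_le_tsum s (fun i _ => norm_nonneg _)

lemma hasSumTN_of {ι : Type*} {R : ι → H →L[ℂ] H} (hR : ∀ i, TCBound (R i) 1) {a : ι → ℂ}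
    (ha : Summable fun i => ‖a i‖) {T : H →L[ℂ] H} (hT : HasSum (fun i => a i • R i) T) :
    HasSumTN (fun i => a i • R i) T := by
  refine squeeze_zero (fun s => traceNorm_nonneg' _) (fun s => ?_)
    (tendsto_tsum_compl_atTop_zero fun i => ‖a i‖)
  have h1 : HasSum (fun i : {x // x ∉ s} => a i • R i) (T - ∑ i ∈ s, a i • R i) := by
    have := (s.hasSum_compl_iff (f := fun i => a i • R i) (a := T - ∑ i ∈ s, a i • R i)).2
      (by rwa [sub_add_cancel])
    exact this
  exact (tcBound_hasSum (fun i : {x // x ∉ s} => hR i) (ha.subtype _) h1).traceNorm_le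

lemma exists_channel (hinf : ¬ FiniteDimensional ℂ H) (F : ℕ → H →L[ℂ] H)
    (hpos : ∀ k, (F k).IsPositive) (hsum : HasSum F 1) (hnorm : Summable fun k => ‖F k‖) :
    ∃ Φ : (H →L[ℂ] H) →ₗ[ℂ] (H →L[ℂ] H), IsChannel Φ ∧ IsSEB Φ ∧
      ∀ X : TC H, (Φ X.op = 0 ↔ ∀ k, tau hinf (F k) X = 0) := by
  obtain ⟨g, hg⟩ := exists_orthonormal_nat hinf
  let R : ℕ → H →L[ℂ] H := fun k => rankOne (g k) (g k)
  have hR1 : ∀ k, TCBound (R k) 1 := by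
    intro k
    have := tcBound_rankOne (g k) (g k)
    rwa [hg.1, mul_one] at this
  have hRpos : ∀ k, (R k).IsPositive := fun k => InnerProductSpace.isPositive_rankOne_self (g k)
  have hRtr : ∀ k, Tr (R k) = 1 := by
    intro k
    rw [Tr_rankOne, inner_self_eq_norm_sq_to_K, hg.1]; simp
  have hsm : Summable fun k => (tau hinf (F k)).smulRight (R k) := by
    refine Summable.of_norm_bounded (g := fun k => ‖tau (H := H) hinf‖ * ‖F k‖)
      (hnorm.mul_left _) fun k => ?_
    rw [norm_smulRight_apply]
    have h1 := (tau hinf).le_opNorm (F k)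
    have h2 := (hR1 k).norm_le
    have h3 := norm_nonneg (tau hinf (F k))
    nlinarith
  let Ψ : TC H →L[ℂ] (H →L[ℂ] H) := ∑' k, (tau hinf (F k)).smulRight (R k)
  have hΨ : ∀ X : TC H, HasSum (fun k => tau hinf (F k) X • R k) (Ψ X) := by
    intro X
    have := hsm.hasSum.mapL (ContinuousLinearMap.apply ℂ (H →L[ℂ] H) X)
    simpa using this
  have ha : ∀ X : TC H, HasSum (fun k => tau hinf (F k) X) (Tr X.op) := by
    intro X
    have := hsum.mapL ((tau hinf).flip X)
    simpa using this
  have han : ∀ X : TC H, Summable fun k => ‖tau hinf (F k) X‖ := by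
    intro X
    refine Summable.of_nonneg_of_le (fun _ => norm_nonneg _) (fun k => ?_)
      ((hnorm.mul_left ‖tau (H := H) hinf‖).mul_right ‖X‖)
    exact (tau hinf).le_opNorm₂ (F k) X
  let Ψ' : tcSub H →ₗ[ℂ] (H →L[ℂ] H) :=
    { toFun := fun X => Ψ (TC.mk X.1 X.2)
      map_add' := fun X Y => Ψ.map_add (TC.mk X.1 X.2) (TC.mk Y.1 Y.2)
      map_smul' := fun c X => Ψ.map_smul c (TC.mk X.1 X.2) }
  obtain ⟨Φ, hΦ⟩ := LinearMap.exists_extend Ψ'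
  have hΦX : ∀ X : TC H, Φ X.op = Ψ X := fun X => congrArg (fun φ => φ (X : tcSub H)) hΦ
  have hTN : ∀ X : TC H, HasSumTN (fun k => tau hinf (F k) X • R k) (Ψ X) :=
    fun X => hasSumTN_of hR1 (han X) (hΨ X)
  have htc : ∀ X : TC H, IsTraceClass (Ψ X) := fun X => (tcBound_hasSum hR1 (han X) (hΨ X)).tc
  refine ⟨Φ, ⟨?_, ?_, ?_⟩, ⟨R, F, ?_, hpos, ?_, ?_⟩, ?_⟩
  · intro X hX
    have := htc (TC.mk X hX)
    rwa [← hΦX] at this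
  · intro n M hM hMpos x
    let Y : Fin n → Fin n → TC H := fun i j => TC.mk (M i j) (hM i j)
    let c : ℕ → Fin n → ℂ := fun k i => ⟪g k, x i⟫
    let Z : ℕ → TC H := fun k => ∑ i, ∑ j, (starRingEnd ℂ (c k i) * c k j) • Y i j
    have h1 : ∀ i j, HasSum (fun k => tau hinf (F k) (Y i j) * (starRingEnd ℂ (c k i) * c k j))
        ⟪x i, Φ (M i j) (x j)⟫ := by
      intro i j
      have h2 := (hΨ (Y i j)).mapL ((innerSL ℂ (x i)).comp (ContinuousLinearMap.apply ℂ H (x j)))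
      have h3 : Φ (M i j) = Ψ (Y i j) := hΦX (Y i j)
      rw [h3]
      refine h2.congr_both (fun k => ?_) rfl
      simp only [ContinuousLinearMap.comp_apply, apply_apply, smul_apply, R, rankOne_apply',
        innerSL_apply_apply, inner_smul_right, c, inner_conj_symm]
      ring
    have h2 : HasSum (fun k => tau hinf (F k) (Z k)) (∑ i, ∑ j, ⟪x i, Φ (M i j) (x j)⟫) := by
      have := hasSum_sum (s := Finset.univ) fun i _ =>
        hasSum_sum (s := Finset.univ) fun j _ => h1 i j
      refine this.congr_both (fun k => ?_) rfl
      simp only [Z, map_sum, map_smul, smul_eq_mul]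
      refine Finset.sum_congr rfl fun i _ => Finset.sum_congr rfl fun j _ => ?_
      ring
    have h3 : ∀ k, 0 ≤ (tau hinf (F k) (Z k)).re ∧ (tau hinf (F k) (Z k)).im = 0 := by
      intro k
      refine Tr_mul_nonneg hinf (hpos k) (Z k).tc fun y => ?_
      have h4 : ⟪y, (Z k).op y⟫ = ∑ i, ∑ j, ⟪c k i • y, M i j (c k j • y)⟫ := by
        simp only [Z, map_sum, map_smul, sum_apply, smul_apply, inner_sum, inner_smul_left,
          inner_smul_right, Y, TC.op_mk]
        refine Finset.sum_congr rfl fun i _ => Finset.sum_congr rfl fun j _ => ?_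
        ring
      rw [h4]
      exact hMpos fun i => c k i • y
    constructor
    · exact (Complex.hasSum_re h2).nonneg fun k => (h3 k).1
    · refine (Complex.hasSum_im h2).unique ?_
      exact hasSum_zero.congr_both (fun k => (h3 k).2) rfl
  · intro X hX
    let X' := TC.mk X hX
    have h1 : HasSum (fun k => tau hinf (F k) X' • TC.mk (R k) (hR1 k).tc)
        (TC.mk (Ψ X') (htc X')) := by
      refine tendsto_iff_norm_sub_tendsto_zero.2 ?_
      refine (hTN X').congr fun s => ?_
      rw [norm_sub_rev, TC.norm_eq]
      simp
    have h2 := h1.mapL trL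
    simp only [map_smul, trL_apply, TC.op_mk, hRtr, smul_eq_mul, mul_one] at h2
    have h3 : Φ X = Ψ X' := hΦX X'
    rw [h3]
    exact h2.unique (ha X')
  · exact fun k => ⟨(hR1 k).tc, hRpos k, hRtr k⟩
  · intro x
    have := hsum.mapL (ContinuousLinearMap.apply ℂ H x)
    simpa using this
  · intro X hX
    have h3 : Φ X = Ψ (TC.mk X hX) := hΦX (TC.mk X hX)
    rw [h3]
    exact hTN (TC.mk X hX)
  · intro X
    rw [hΦX]
    constructor
    · intro h0 k
      have h1 := (hΨ X).mapL ((innerSL ℂ (g k)).comp (ContinuousLinearMap.apply ℂ H (g k)))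
      rw [h0, map_zero] at h1
      have h2 := hasSum_single (f := fun l => ((innerSL ℂ (g k)).comp
        (ContinuousLinearMap.apply ℂ H (g k))) (tau hinf (F l) X • R l)) k (by
          intro l hl
          have : ⟪g l, g k⟫ = 0 := hg.2 hl
          simp [R, this])
      have h3 := h1.unique h2
      have h4 : ⟪g k, g k⟫ = 1 := by rw [inner_self_eq_norm_sq_to_K, hg.1]; simp
      simp only [ContinuousLinearMap.comp_apply, apply_apply, smul_apply, R, rankOne_apply',
        innerSL_apply_apply, inner_smul_right, h4, mul_one] at h3
      exact h3.symm
    · intro h0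
      have := hΨ X
      simp only [h0, zero_smul] at this
      exact this.unique hasSum_zero

end channel

/-- Every trace-norm-closed self-adjoint subspace of trace-zero
trace-class operators on a separable infinite-dimensional Hilbert space is the null
space of some strongly entanglement breaking channel. -/
theorem selfAdjoint_traceZero_subspace_is_null_space_of_SEB
    {H : Type*} [NormedAddCommGroup H] [InnerProductSpace ℂ H] [CompleteSpace H]
    [TopologicalSpace.SeparableSpace H] (hinf : ¬ FiniteDimensional ℂ H)
    (N : Submodule ℂ (H →L[ℂ] H))
    (hN_tc : ∀ X ∈ N, IsTraceClass X)
    (hN_tr0 : ∀ X ∈ N, Tr X = 0)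
    (hN_sa : ∀ X ∈ N, ContinuousLinearMap.adjoint X ∈ N)
    (hN_closed : ∀ X : H →L[ℂ] H, IsTraceClass X →
      (∀ ε : ℝ, 0 < ε → ∃ Y ∈ N, traceNorm (X - Y) < ε) → X ∈ N) :
    ∃ Φ : (H →L[ℂ] H) →ₗ[ℂ] (H →L[ℂ] H),
      IsChannel Φ ∧ IsSEB Φ ∧
      ∀ X : H →L[ℂ] H, IsTraceClass X → (Φ X = 0 ↔ X ∈ N) := by
  obtain ⟨A, hAsa, hA1, hA⟩ := exists_separating hinf N hN_tc hN_sa hN_closed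
  let r : ℕ → ℝ := fun k => (1 / 2) ^ (k + 2)
  have hr0 : ∀ k, 0 < r k := fun k => by positivity
  have hr : HasSum r (1 / 2) := by
    have := (hasSum_geometric_two).mul_left (1 / 4 : ℝ)
    refine this.congr_both (fun k => ?_) (by norm_num)
    simp only [r]; ring
  have hrc : HasSum (fun k => (r k : ℂ)) ((1 / 2 : ℝ) : ℂ) := Complex.hasSum_ofReal.2 hr
  have hbd : ∀ k, ‖(r k : ℂ) • A k‖ ≤ r k := by
    intro k
    rw [norm_smul, Complex.norm_real, Real.norm_of_nonneg (hr0 k).le]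
    exact mul_le_of_le_one_right (hr0 k).le (hA1 k)
  have hsA : Summable fun k => (r k : ℂ) • A k := Summable.of_norm_bounded hr.summable hbd
  let B := ∑' k, (r k : ℂ) • A k
  have hB : ‖B‖ ≤ 1 / 2 := tsum_of_norm_bounded hr hbd
  have hBsa : IsSelfAdjoint B := by
    have h1 : ∀ k, star ((r k : ℂ) • A k) = (r k : ℂ) • A k := fun k =>
      IsSelfAdjoint.smul (Complex.conj_ofReal _) (hAsa k)
    have h2 := hsA.hasSum.star
    simp only [h1] at h2
    exact h2.unique hsA.hasSum
  let F : ℕ → H →L[ℂ] H := fun k => Nat.casesOn k (((1 / 2 : ℝ) : ℂ) • 1 + -B)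
    fun k => (r k : ℂ) • (((1 : ℝ) : ℂ) • 1 + A k)
  have hF0 : F 0 = ((1 / 2 : ℝ) : ℂ) • 1 + -B := rfl
  have hFs : ∀ k, F (k + 1) = (r k : ℂ) • (((1 : ℝ) : ℂ) • 1 + A k) := fun k => rfl
  have hFpos : ∀ k, (F k).IsPositive := by
    rintro (_ | k)
    · rw [hF0]
      exact isPositive_of_norm_le hBsa.neg (by rwa [norm_neg])
    · rw [hFs]
      exact (isPositive_of_norm_le (hAsa k) (hA1 k)).smul_of_nonneg
        (Complex.zero_le_real.2 (hr0 k).le)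
  have hFsum : HasSum F 1 := by
    have h1 : HasSum (fun k => F (k + 1)) (((1 / 2 : ℝ) : ℂ) • (1 : H →L[ℂ] H) + B) := by
      have h2 := (hrc.smul_const (1 : H →L[ℂ] H)).add hsA.hasSum
      refine h2.congr_both (fun k => ?_) rfl
      rw [hFs, smul_add, Complex.ofReal_one, one_smul]
    have h3 := (hasSum_nat_add_iff (f := F) 1).1 h1
    refine h3.congr_both (fun k => rfl) ?_
    rw [Finset.sum_range_one, hF0]
    have : (1 : H →L[ℂ] H) = ((1 / 2 : ℝ) : ℂ) • (1 : H →L[ℂ] H)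
        + ((1 / 2 : ℝ) : ℂ) • (1 : H →L[ℂ] H) := by
      rw [← add_smul]; norm_num
    nth_rewrite 1 [this]
    abel
  have hFnorm : Summable fun k => ‖F k‖ := by
    rw [← summable_nat_add_iff 1]
    refine Summable.of_nonneg_of_le (fun _ => norm_nonneg _) (fun k => ?_)
      (hr.summable.mul_right 2)
    rw [hFs, norm_smul, Complex.norm_real, Real.norm_of_nonneg (hr0 k).le]
    refine mul_le_mul_of_nonneg_left ?_ (hr0 k).le
    rw [Complex.ofReal_one, one_smul]
    have h1 : ‖(1 : H →L[ℂ] H)‖ ≤ 1 := norm_one_le'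
    have := norm_add_le (1 : H →L[ℂ] H) (A k)
    have := hA1 k
    linarith
  obtain ⟨Φ, hch, hseb, hnull⟩ := exists_channel hinf F hFpos hFsum hFnorm
  refine ⟨Φ, hch, hseb, fun X hX => ?_⟩
  have key := hnull (TC.mk X hX)
  have keyA := hA (TC.mk X hX)
  set X' := TC.mk X hX with hX'
  rw [TC.op_mk] at key keyA
  have hs : HasSum (fun k => tau hinf (F k) X') (Tr X) := by
    have := hFsum.mapL ((tau hinf).flip X')
    simpa [X'] using this
  have hFA : ∀ k, tau hinf (F (k + 1)) X' = (r k : ℂ) * (Tr X + tau hinf (A k) X') := by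
    intro k
    rw [hFs, Complex.ofReal_one, one_smul, map_smul, map_add, smul_apply, add_apply, smul_eq_mul]
    simp [X']
  rw [key, keyA]
  constructor
  · intro h0 k
    have htr : Tr X = 0 := by
      simp only [h0] at hs
      exact hs.unique hasSum_zero
    have h1 := h0 (k + 1)
    rw [hFA, htr, zero_add, mul_eq_zero] at h1
    refine h1.resolve_left ?_
    exact_mod_cast (hr0 k).ne'
  · intro h0
    have htr : Tr X = 0 := hN_tr0 X (keyA.2 h0)
    have h1 : ∀ k, tau hinf (F (k + 1)) X' = 0 := by
      intro k
      rw [hFA, htr, h0 k, add_zero, mul_zero]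
    rintro (_ | k)
    · have h2 := hasSum_single (f := fun k => tau hinf (F k) X') 0 (by
        rintro (_ | k) hk
        · exact (hk rfl).elim
        · exact h1 k)
      rw [← h2.unique hs] at htr
      exact htr
    · exact h1 k

end
end

section
/- Let H be a complex separable Hilbert space, and let Φ: T(H) → T(H) be a channel given by Φ(X) = Σ_{k=1}^∞ E_k X E_k* with rank-one operators E_k = u_k v_k*, where u_k, v_k ∈ H, ‖u_k‖ = 1 for all k, and Σ_{k=1}^∞ v_k v_k* = I_H (strong operator topology). Let Φ*: B(H) → B(H) be the dual map, Φ*(Y) = Σ_{k=1}^∞ E_k* Y E_k. Then an orthogonal projection P ∈ B(H) satisfies Φ*(P) = P if and only if P E_k = E_k P for all k. -/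
noncomputable section

open scoped ComplexInnerProductSpace
open ContinuousLinearMap Filter Topology

theorem proj_kill_aux
    {H : Type*} [NormedAddCommGroup H] [InnerProductSpace ℂ H] [CompleteSpace H]
    (E : ℕ → (H →L[ℂ] H)) (Q : H →L[ℂ] H) (hsa : IsSelfAdjoint Q) (hid : Q * Q = Q) (x : H)
    (hs : HasSum (fun k => (ContinuousLinearMap.adjoint (E k) * Q * E k) x) 0) (k : ℕ) :
    Q (E k x) = 0 := by
  have h1 := (innerSL ℂ x).hasSum hs
  have h2 := Complex.reCLM.hasSum h1
  have h3 : ∀ k, Complex.reCLM (innerSL ℂ x ((ContinuousLinearMap.adjoint (E k) * Q * E k) x))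
      = ‖Q (E k x)‖ ^ 2 := by
    intro k
    have hq : Q (E k x) = ContinuousLinearMap.adjoint Q (Q (E k x)) := by
      rw [hsa.adjoint_eq]
      exact (congrArg (fun T : H →L[ℂ] H => T (E k x)) hid).symm
    change (⟪x, ContinuousLinearMap.adjoint (E k) (Q (E k x))⟫).re = _
    rw [ContinuousLinearMap.adjoint_inner_right, hq, ContinuousLinearMap.adjoint_inner_right,
      ← hq, inner_self_eq_norm_sq_to_K]
    norm_cast
  have h4 : HasSum (fun k => ‖Q (E k x)‖ ^ 2) 0 := by
    refine (by simpa using h2 : HasSum _ (0 : ℝ)).congr_fun ?_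
    intro k
    exact (h3 k).symm
  have h5 := (hasSum_zero_iff_of_nonneg (fun k => sq_nonneg ‖Q (E k x)‖)).1 h4
  have h6 := congrFun h5 k
  simpa using h6

/-- For a channel with rank-one Kraus operators `Eₖ = uₖ vₖ*`
(`‖uₖ‖ = 1`, `∑ₖ vₖ vₖ* = I` in SOT) and dual map `Φ*(Y) = ∑ₖ Eₖ* Y Eₖ`, an
orthogonal projection `P` is a fixed point of `Φ*` iff `P` commutes with every `Eₖ`. -/
theorem projection_fixed_point_iff_commutes
    {H : Type*} [NormedAddCommGroup H] [InnerProductSpace ℂ H] [CompleteSpace H]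
    [TopologicalSpace.SeparableSpace H]
    (u v : ℕ → H) (hu : ∀ k, ‖u k‖ = 1)
    (hv : ∀ x : H, HasSum (fun k => ⟪v k, x⟫ • v k) x)
    (E : ℕ → (H →L[ℂ] H)) (hE : ∀ k, E k = rankOne (u k) (v k))
    (P : H →L[ℂ] H) (hPsa : IsSelfAdjoint P) (hPidem : P * P = P) :
    (∀ x : H,
        HasSum (fun k => (ContinuousLinearMap.adjoint (E k) * P * E k) x) (P x)) ↔
    ∀ k, P * E k = E k * P := by
  have hEE : ∀ k x, (ContinuousLinearMap.adjoint (E k)) (E k x) = ⟪v k, x⟫ • v k := by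
    intro k x
    refine ext_inner_left ℂ fun y => ?_
    rw [ContinuousLinearMap.adjoint_inner_right, hE k]
    simp [rankOne, inner_smul_left, inner_smul_right, hu k]
  have hI : ∀ x, HasSum (fun k => (ContinuousLinearMap.adjoint (E k)) (E k x)) x := by
    intro x
    simpa only [hEE] using hv x
  have hPP : ∀ x, P (P x) = P x := fun x => congrArg (fun T : H →L[ℂ] H => T x) hPidem
  constructor
  · intro h k
    have hA : ∀ x, P (E k (x - P x)) = 0 := by
      intro x
      refine proj_kill_aux E P hPsa hPidem _ ?_ k
      have := h (x - P x)
      rwa [map_sub, hPP, sub_self] at this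
    have hB : ∀ x, (1 - P) (E k (P x)) = 0 := by
      intro x
      refine proj_kill_aux E (1 - P) ((IsSelfAdjoint.one _).sub hPsa) ?_ _ ?_ k
      · rw [sub_mul, mul_sub, mul_sub, hPidem]; simp
      · have := (hI (P x)).sub (h (P x))
        rw [hPP, sub_self] at this
        convert this using 2 with j
        simp
    ext x
    have a := hA x
    have b := hB x
    simp only [map_sub, sub_eq_zero, ContinuousLinearMap.sub_apply,
      ContinuousLinearMap.one_apply] at a b
    exact a.trans b.symm
  · intro h x
    convert hI (P x) using 2 with k
    change ContinuousLinearMap.adjoint (E k) ((P * E k) x) = _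
    rw [h k]
    rfl
end
end

section
/- Let H be a complex separable Hilbert space, and let Φ: T(H) → T(H) be a channel given by Φ(X) = Σ_{k=1}^∞ E_k X E_k* with rank-one operators E_k = u_k v_k*, where u_k, v_k ∈ H are nonzero vectors, ‖u_k‖ = 1 for all k, and Σ_{k=1}^∞ v_k v_k* = I_H (strong operator topology). If an orthogonal projection P ∈ B(H) satisfies Φ*(P) = P, where Φ*(Y) = Σ_{k=1}^∞ E_k* Y E_k is the dual map, then for every k the vectors u_k and v_k are eigenvectors of P; in particular P v_k = ⟨u_k, P u_k⟩ v_k for all k. -/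
noncomputable section

open scoped ComplexInnerProductSpace
open ContinuousLinearMap Filter Topology

theorem weighted_sum_zero {H : Type*} [NormedAddCommGroup H] [InnerProductSpace ℂ H]
    (v : ℕ → H) (a : ℕ → ℝ) (ha : ∀ k, 0 ≤ a k) (x : H)
    (h : HasSum (fun k => ((a k : ℂ) * ⟪v k, x⟫) • v k) 0) (k : ℕ) :
    a k = 0 ∨ ⟪v k, x⟫ = 0 := by
  have h1 := (innerSL ℂ x).hasSum h
  have h2 := Complex.reCLM.hasSum h1
  have h3 : HasSum (fun k => a k * ‖⟪v k, x⟫‖ ^ 2) 0 := by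
    convert h2 using 1
    · funext j
      simp only [Function.comp_apply, innerSL_apply_apply, inner_smul_right, Complex.reCLM_apply]
      rw [mul_assoc, ← inner_conj_symm x (v j), Complex.mul_conj, Complex.normSq_eq_norm_sq,
        ← Complex.ofReal_mul, Complex.ofReal_re]
    · simp
  have h4 := (hasSum_zero_iff_of_nonneg (fun j => mul_nonneg (ha j) (sq_nonneg _))).1 h3
  have h5 := congrFun h4 k
  simpa using h5

/-- If an orthogonal projection `P` is a fixed point of the dual map
`Φ*(Y) = ∑ₖ Eₖ* Y Eₖ` of a channel with rank-one Kraus operators `Eₖ = uₖ vₖ*`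
(with `uₖ, vₖ ≠ 0`, `‖uₖ‖ = 1`, `∑ₖ vₖ vₖ* = I` in SOT), then every `uₖ` and `vₖ` is
an eigenvector of `P`; in particular `P vₖ = ⟪uₖ, P uₖ⟫ vₖ`. -/
theorem fixed_projection_eigenvectors
    {H : Type*} [NormedAddCommGroup H] [InnerProductSpace ℂ H] [CompleteSpace H]
    [TopologicalSpace.SeparableSpace H]
    (u v : ℕ → H) (hu0 : ∀ k, u k ≠ 0) (hv0 : ∀ k, v k ≠ 0) (hu : ∀ k, ‖u k‖ = 1)
    (hv : ∀ x : H, HasSum (fun k => ⟪v k, x⟫ • v k) x)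
    (E : ℕ → (H →L[ℂ] H)) (hE : ∀ k, E k = rankOne (u k) (v k))
    (P : H →L[ℂ] H) (hPsa : IsSelfAdjoint P) (hPidem : P * P = P)
    (hfix : ∀ x : H,
      HasSum (fun k => (ContinuousLinearMap.adjoint (E k) * P * E k) x) (P x)) :
    ∀ k, (∃ beta : ℂ, P (u k) = beta • u k) ∧ P (v k) = ⟪u k, P (u k)⟫ • v k := by
  have hsym : ∀ x y : H, ⟪P x, y⟫ = ⟪x, P y⟫ := fun x y => by
    conv_lhs => rw [← hPsa.adjoint_eq]
    exact ContinuousLinearMap.adjoint_inner_left P y x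
  have hPP : ∀ x : H, P (P x) = P x := fun x => by
    rw [← ContinuousLinearMap.mul_apply, hPidem]
  have hc : ∀ j, ⟪u j, P (u j)⟫ = ((‖P (u j)‖ ^ 2 : ℝ) : ℂ) := fun j => by
    rw [← hPP, ← hsym, inner_self_eq_norm_sq_to_K]; simp [hPP]
  have hle : ∀ j, 0 ≤ 1 - ‖P (u j)‖ ^ 2 := fun j => by
    have h1 : ‖P (u j)‖ ^ 2 ≤ ‖u j‖ * ‖P (u j)‖ := by
      have := norm_inner_le_norm (𝕜 := ℂ) (u j) (P (u j))
      rw [hc, Complex.norm_real, Real.norm_of_nonneg (sq_nonneg _)] at this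
      exact this
    rw [hu] at h1
    nlinarith [norm_nonneg (P (u j))]
  have hterm : ∀ x j, (ContinuousLinearMap.adjoint (E j) * P * E j) x
      = (((‖P (u j)‖ ^ 2 : ℝ) : ℂ) * ⟪v j, x⟫) • v j := fun x j => by
    refine ext_inner_left ℂ fun w => ?_
    rw [ContinuousLinearMap.mul_apply, ContinuousLinearMap.mul_apply,
      ContinuousLinearMap.adjoint_inner_right, hE]
    simp only [rankOne, ContinuousLinearMap.comp_apply, innerSL_apply_apply,
      ContinuousLinearMap.toSpanSingleton_apply, map_smul, inner_smul_left, inner_smul_right,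
      hc, inner_conj_symm]
    ring
  simp only [hterm] at hfix
  intro k
  have hA : P (u k) = 0 ∨ P (v k) = v k := by
    have h := hfix (v k - P (v k))
    have h0 : P (v k - P (v k)) = 0 := by rw [map_sub, hPP, sub_self]
    rw [h0] at h
    rcases weighted_sum_zero v _ (fun j => sq_nonneg _) _ h k with h1 | h1
    · left; simpa using h1
    · right
      have h2 : ⟪v k - P (v k), v k - P (v k)⟫ = 0 := by
        rw [inner_sub_left, h1, hsym, h0, inner_zero_right, sub_zero]
      exact (sub_eq_zero.1 (inner_self_eq_zero.1 h2)).symm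
  have hB : ‖P (u k)‖ ^ 2 = 1 ∨ P (v k) = 0 := by
    have h := (hv (P (v k))).sub (hfix (P (v k)))
    rw [hPP, sub_self] at h
    have h' : HasSum (fun j => (((1 - ‖P (u j)‖ ^ 2 : ℝ) : ℂ) * ⟪v j, P (v k)⟫) • v j) 0 := by
      convert h using 2 with j
      rw [← sub_smul]; push_cast; ring_nf
    rcases weighted_sum_zero v _ hle _ h' k with h1 | h1
    · left; linarith
    · right
      rw [← hPP, ← hsym] at h1
      exact inner_self_eq_zero.1 h1
  rcases hA with hA | hA
  · rcases hB with hB | hB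
    · simp [hA] at hB
    · exact ⟨⟨0, by simp [hA]⟩, by simp [hA, hB]⟩
  · rcases hB with hB | hB
    · refine ⟨⟨1, ?_⟩, by rw [hc, hB, hA]; simp⟩
      have h2 : ⟪u k - P (u k), u k - P (u k)⟫ = 0 := by
        have h3 : ⟪P (u k), u k - P (u k)⟫ = 0 := by
          rw [hsym, map_sub, hPP, sub_self, inner_zero_right]
        rw [inner_sub_left, h3, inner_sub_right, hc, hB, inner_self_eq_norm_sq_to_K, hu]; simp
      rw [one_smul]
      exact (sub_eq_zero.1 (inner_self_eq_zero.1 h2)).symm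
    · exact absurd (hA.symm.trans hB) (hv0 k)

end
end

section
/- Let H be a complex separable Hilbert space, and let Φ: T(H) → T(H) be a channel given by Φ(X) = Σ_{k=1}^∞ E_k X E_k* with rank-one operators E_k = u_k v_k*, where u_k, v_k ∈ H, ‖u_k‖ = 1 for all k, and Σ_{k=1}^∞ v_k v_k* = I_H (strong operator topology). Then any two orthogonal projections P and Q in the fixed point set Fix(Φ*) = {Y ∈ B(H) : Φ*(Y) = Y} of the dual map Φ* commute: P Q = Q P. -/
noncomputable section

open scoped ComplexInnerProductSpace
open ContinuousLinearMap Filter Topology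

lemma fpc_aux {H : Type*} [NormedAddCommGroup H] [InnerProductSpace ℂ H] [CompleteSpace H]
    (E : ℕ → (H →L[ℂ] H)) (R : H →L[ℂ] H)
    (hsa : IsSelfAdjoint R) (hid : R * R = R)
    (hfix : ∀ x : H, HasSum (fun k => (ContinuousLinearMap.adjoint (E k) * R * E k) x) (R x))
    (x : H) (hx : R x = 0) (k : ℕ) : R (E k x) = 0 := by
  have hR : ∀ y, ⟪y, R y⟫ = ((‖R y‖ ^ 2 : ℝ) : ℂ) := by
    intro y
    have h1 : R (R y) = R y := congrArg (fun T : H →L[ℂ] H => T y) hid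
    have h2 : ⟪R y, R y⟫ = ⟪y, R (R y)⟫ := by
      conv_lhs => rw [← hsa.adjoint_eq]
      rw [ContinuousLinearMap.adjoint_inner_left, hsa.adjoint_eq]
    rw [← h1, ← h2, inner_self_eq_norm_sq_to_K, h1]
    simp
  have h := (innerSL ℂ x).hasSum (hfix x)
  rw [hx] at h
  have e : ∀ k, (innerSL ℂ x) ((ContinuousLinearMap.adjoint (E k) * R * E k) x)
      = ((‖R (E k x)‖ ^ 2 : ℝ) : ℂ) := by
    intro k
    rw [← hR]
    simp [ContinuousLinearMap.adjoint_inner_right]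
  simp only [e, Function.comp_def, map_zero] at h
  have h' : HasSum (fun k => ‖R (E k x)‖ ^ 2) 0 := by
    rw [← Complex.ofReal_zero] at h
    exact Complex.hasSum_ofReal.1 h
  have h0 := (hasSum_zero_iff_of_nonneg (fun k => by positivity)).1 h'
  have := congrFun h0 k
  simpa using this

lemma fpc_eigen {H : Type*} [NormedAddCommGroup H] [InnerProductSpace ℂ H] [CompleteSpace H]
    (u v : ℕ → H) (hu : ∀ k, ‖u k‖ = 1)
    (hv : ∀ x : H, HasSum (fun k => ⟪v k, x⟫ • v k) x)
    (E : ℕ → (H →L[ℂ] H)) (hE : ∀ k, E k = rankOne (u k) (v k))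
    (P : H →L[ℂ] H) (hPsa : IsSelfAdjoint P) (hPidem : P * P = P)
    (hPfix : ∀ x : H,
      HasSum (fun k => (ContinuousLinearMap.adjoint (E k) * P * E k) x) (P x)) (k : ℕ) :
    ∃ p : ℂ, P (v k) = p • v k := by
  have hEx : ∀ k x, E k x = ⟪v k, x⟫ • u k := by
    intro k x; rw [hE]; simp [rankOne]
  have huu : ∀ k, ⟪u k, u k⟫ = 1 := by
    intro k; rw [inner_self_eq_norm_sq_to_K, hu]; simp
  have hEE : ∀ k x, ContinuousLinearMap.adjoint (E k) (E k x) = ⟪v k, x⟫ • v k := by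
    intro k x
    refine ext_inner_right ℂ fun y => ?_
    rw [ContinuousLinearMap.adjoint_inner_left, hEx, hEx]
    simp only [inner_smul_left, inner_smul_right, huu]
    ring
  have hPP : ∀ y, P (P y) = P y := fun y => congrArg (fun T : H →L[ℂ] H => T y) hPidem
  have a1 : ∀ x, P (E k (x - P x)) = 0 := fun x =>
    fpc_aux E P hPsa hPidem hPfix _ (by simp [hPP]) k
  have a2 : ∀ x, (1 - P) (E k (P x)) = 0 := fun x => by
    refine fpc_aux E (1 - P) ((IsSelfAdjoint.one _).sub hPsa) ?_ ?_ _ (by simp [hPP]) k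
    · ext y; simp [hPP]
    · intro y
      convert (hv y).sub (hPfix y) using 1
      · ext j
        simp [hEE]
      · simp
  have hc : ∀ x, P (E k x) = E k (P x) := by
    intro x
    have h1 := a1 x
    have h2 := a2 x
    simp only [map_sub, sub_eq_zero] at h1
    simp only [ContinuousLinearMap.sub_apply, ContinuousLinearMap.one_apply, sub_eq_zero] at h2
    rw [h1, ← h2]
  refine ⟨⟪P (u k), u k⟫, ext_inner_right ℂ fun x => ?_⟩
  have h := congrArg (fun z => ⟪u k, z⟫) (hc x)
  simp only [hEx, map_smul, inner_smul_right, huu, mul_one] at h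
  have s : ⟪P (v k), x⟫ = ⟪v k, P x⟫ := by
    conv_lhs => rw [← hPsa.adjoint_eq]
    rw [ContinuousLinearMap.adjoint_inner_left]
  rw [s, ← h, inner_smul_left, inner_conj_symm]
  ring

/-- Any two orthogonal projections in the fixed point set of the dual
map `Φ*(Y) = ∑ₖ Eₖ* Y Eₖ` of a channel with rank-one Kraus operators `Eₖ = uₖ vₖ*`
(`‖uₖ‖ = 1`, `∑ₖ vₖ vₖ* = I` in SOT) commute. -/
theorem fixed_projections_commute
    {H : Type*} [NormedAddCommGroup H] [InnerProductSpace ℂ H] [CompleteSpace H]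
    [TopologicalSpace.SeparableSpace H]
    (u v : ℕ → H) (hu : ∀ k, ‖u k‖ = 1)
    (hv : ∀ x : H, HasSum (fun k => ⟪v k, x⟫ • v k) x)
    (E : ℕ → (H →L[ℂ] H)) (hE : ∀ k, E k = rankOne (u k) (v k))
    (P Q : H →L[ℂ] H)
    (hPsa : IsSelfAdjoint P) (hPidem : P * P = P)
    (hQsa : IsSelfAdjoint Q) (hQidem : Q * Q = Q)
    (hPfix : ∀ x : H,
      HasSum (fun k => (ContinuousLinearMap.adjoint (E k) * P * E k) x) (P x))
    (hQfix : ∀ x : H,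
      HasSum (fun k => (ContinuousLinearMap.adjoint (E k) * Q * E k) x) (Q x)) :
    P * Q = Q * P := by
  have hw : ∀ k, P (Q (v k)) = Q (P (v k)) := by
    intro k
    obtain ⟨p, hp⟩ := fpc_eigen u v hu hv E hE P hPsa hPidem hPfix k
    obtain ⟨q, hq⟩ := fpc_eigen u v hu hv E hE Q hQsa hQidem hQfix k
    rw [hp, hq, map_smul, map_smul, hp, hq, smul_comm]
  ext x
  have h1 := (P * Q).hasSum (hv x)
  have h2 := (Q * P).hasSum (hv x)
  refine h1.unique ?_
  convert h2 using 1
  ext k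
  simp [hw]

end
end

section
/- Let H be a complex separable infinite-dimensional Hilbert space and let N ⊆ T(H) be a trace-norm-closed self-adjoint subspace of trace-zero trace-class operators. Let N^⊥ = {Y ∈ B(H) : Tr(XY) = 0 for all X ∈ N}. Then there exists a sequence {F_k}_{k=1}^∞ of positive operators in N^⊥ with Σ_{k=1}^∞ F_k = I_H (the series converging in operator norm) such that the linear span of {F_k : k ≥ 1} is dense in N^⊥ in the weak* topology of B(H) (the topology induced by the duality with T(H)). -/
noncomputable section

open scoped ComplexInnerProductSpace
open ContinuousLinearMap Filter Topology

section Helpers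
variable {H : Type*} [NormedAddCommGroup H] [InnerProductSpace ℂ H] [CompleteSpace H]

/-- Hilbert--Schmidt with respect to the basis. -/
def HSop {ι : Type*} (e : HilbertBasis ι ℂ H) (B : H →L[ℂ] H) : Prop :=
  Summable fun i => ‖B (e i)‖ ^ 2

theorem hasSum_normSq {ι : Type*} (e : HilbertBasis ι ℂ H) (x : H) :
    HasSum (fun i => ‖⟪e i, x⟫‖ ^ 2) (‖x‖ ^ 2) := by
  have h := e.hasSum_inner_mul_inner x x
  have h2 := Complex.hasSum_re h
  rw [inner_self_eq_norm_sq_to_K] at h2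
  convert h2 using 1
  · funext i
    rw [← inner_conj_symm x (e i), mul_comm, Complex.mul_conj, Complex.normSq_eq_norm_sq]
    exact (Complex.ofReal_re _).symm
  · norm_cast

theorem HSop.prod {ι : Type*} {e : HilbertBasis ι ℂ H} {B : H →L[ℂ] H} (h : HSop e B) :
    Summable fun p : ι × ι => ‖⟪e p.2, B (e p.1)⟫‖ ^ 2 := by
  have h' : Summable fun i => ‖B (e i)‖ ^ 2 := h
  rw [summable_prod_of_nonneg (fun _ => by positivity)]
  refine ⟨fun i => (hasSum_normSq e (B (e i))).summable, ?_⟩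
  have heq : (fun i => ‖B (e i)‖ ^ 2) = fun i => ∑' j, ‖⟪e j, B (e i)⟫‖ ^ 2 := by
    funext i
    exact ((hasSum_normSq e (B (e i))).tsum_eq).symm
  rw [heq] at h'
  exact h'

theorem HSop.adjoint {ι : Type*} {e : HilbertBasis ι ℂ H} {B : H →L[ℂ] H} (h : HSop e B) :
    HSop e (adjoint B) := by
  have h1 : Summable fun p : ι × ι => ‖⟪e p.2, (ContinuousLinearMap.adjoint B) (e p.1)⟫‖ ^ 2 := by
    refine (h.prod.prod_symm).congr fun p => ?_
    rw [adjoint_inner_right, norm_inner_symm]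
    simp
  rw [summable_prod_of_nonneg (fun _ => by positivity)] at h1
  refine h1.2.congr fun i => ?_
  exact ((hasSum_normSq e (ContinuousLinearMap.adjoint B (e i))).tsum_eq)

theorem HSop.mul_left {ι : Type*} {e : HilbertBasis ι ℂ H} {B : H →L[ℂ] H} (h : HSop e B)
    (Z : H →L[ℂ] H) : HSop e (Z * B) := by
  refine Summable.of_nonneg_of_le (fun _ => by positivity) (fun i => ?_) (Summable.mul_left (‖Z‖ ^ 2) h)
  rw [← mul_pow]
  exact pow_le_pow_left₀ (norm_nonneg _) (Z.le_opNorm _) 2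

theorem HSop.mul_right {ι : Type*} {e : HilbertBasis ι ℂ H} {B : H →L[ℂ] H} (h : HSop e B)
    (Z : H →L[ℂ] H) : HSop e (B * Z) := by
  have := (h.adjoint.mul_left (ContinuousLinearMap.adjoint Z)).adjoint
  simpa [← ContinuousLinearMap.star_eq_adjoint] using this

theorem HSop.swap {ι : Type*} {e : HilbertBasis ι ℂ H} {A B : H →L[ℂ] H} (hA : HSop e A)
    (hB : HSop e B) :
    HasSum (fun i => ⟪A (e i), B (e i)⟫)
      (∑' j, ⟪ContinuousLinearMap.adjoint B (e j), ContinuousLinearMap.adjoint A (e j)⟫) := by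
  have hs : Summable fun p : ι × ι => ⟪A (e p.1), e p.2⟫ * ⟪e p.2, B (e p.1)⟫ := by
    refine Summable.of_norm_bounded (hA.prod.add hB.prod) fun p => ?_
    rw [norm_mul, norm_inner_symm]
    nlinarith [sq_nonneg (‖⟪e p.2, A (e p.1)⟫‖ - ‖⟪e p.2, B (e p.1)⟫‖),
      sq_nonneg (‖⟪e p.2, A (e p.1)⟫‖), sq_nonneg (‖⟪e p.2, B (e p.1)⟫‖)]
  have h1 := hs.hasSum.prod_fiberwise (fun i => e.hasSum_inner_mul_inner (A (e i)) (B (e i)))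
  have h2 := hs.prod_symm.hasSum.prod_fiberwise
    (g := fun j => ⟪ContinuousLinearMap.adjoint B (e j), ContinuousLinearMap.adjoint A (e j)⟫)
    (fun j => by
      have := e.hasSum_inner_mul_inner (ContinuousLinearMap.adjoint B (e j))
        (ContinuousLinearMap.adjoint A (e j))
      have heq : (fun i => ⟪ContinuousLinearMap.adjoint B (e j), e i⟫ *
          ⟪e i, ContinuousLinearMap.adjoint A (e j)⟫) =
          fun i => ⟪A (e i), e j⟫ * ⟪e j, B (e i)⟫ := by
        funext i
        rw [adjoint_inner_left, adjoint_inner_right, mul_comm]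
      rw [heq] at this
      exact this)
  rw [h2.tsum_eq]
  have h3 := (Equiv.prodComm ι ι).tsum_eq
    (fun p : ι × ι => ⟪A (e p.1), e p.2⟫ * ⟪e p.2, B (e p.1)⟫)
  rw [← h3] at h1
  exact h1

/-- The trace pairing with `X` behaves well. -/
def Good (X : H →L[ℂ] H) : Prop :=
  ∃ ψ : (H →L[ℂ] H) →L[ℂ] ℂ,
    (∀ Z, HasSum (fun i => ⟪stdONB H i, (X * Z) (stdONB H i)⟫) (ψ Z)) ∧
    (∀ Z, HasSum (fun i => ⟪stdONB H i, (Z * X) (stdONB H i)⟫) (ψ Z)) ∧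
    (∀ (Z : ℕ → (H →L[ℂ] H)) (Y : H →L[ℂ] H) (C : ℝ), (∀ n, ‖Z n‖ ≤ C) →
      (∀ x y, Tendsto (fun n => ⟪x, Z n y⟫) atTop (𝓝 ⟪x, Y y⟫)) →
      Tendsto (fun n => ψ (Z n)) atTop (𝓝 (ψ Y)))

theorem Good.add {X X' : H →L[ℂ] H} (h : Good X) (h' : Good X') : Good (X + X') := by
  obtain ⟨ψ, a, b, c⟩ := h
  obtain ⟨ψ', a', b', c'⟩ := h'
  refine ⟨ψ + ψ', fun Z => ?_, fun Z => ?_, fun Z Y C hC hw => ?_⟩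
  · simpa [add_mul, inner_add_right] using (a Z).add (a' Z)
  · simpa [mul_add, inner_add_right] using (b Z).add (b' Z)
  · simpa using (c Z Y C hC hw).add (c' Z Y C hC hw)

theorem Good.smul {X : H →L[ℂ] H} (h : Good X) (k : ℂ) : Good (k • X) := by
  obtain ⟨ψ, a, b, c⟩ := h
  refine ⟨k • ψ, fun Z => ?_, fun Z => ?_, fun Z Y C hC hw => ?_⟩
  · simpa [inner_smul_right] using (a Z).mul_left k
  · simpa [inner_smul_right] using (b Z).mul_left k
  · simpa using (c Z Y C hC hw).const_mul k

theorem good_sq {B : H →L[ℂ] H} (hB : IsSelfAdjoint B) (h : HSop (stdONB H) B) :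
    Good (B * B) := by
  have hB' : ContinuousLinearMap.adjoint B = B := by
    rw [← ContinuousLinearMap.star_eq_adjoint]; exact hB
  have hBi : ∀ x y, ⟪B x, y⟫ = ⟪x, B y⟫ := fun x y => by
    conv_lhs => rw [← hB', adjoint_inner_left]
  have bd : ∀ (Z : H →L[ℂ] H) i, ‖⟪B (stdONB H i), Z (B (stdONB H i))⟫‖ ≤
      ‖Z‖ * ‖B (stdONB H i)‖ ^ 2 := fun Z i => by
    refine (norm_inner_le_norm _ _).trans ?_
    have := Z.le_opNorm (B (stdONB H i))
    nlinarith [norm_nonneg (B (stdONB H i))]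
  have sm : ∀ Z : H →L[ℂ] H, Summable fun i => ⟪B (stdONB H i), Z (B (stdONB H i))⟫ := fun Z =>
    Summable.of_norm_bounded (Summable.mul_left ‖Z‖ h) (bd Z)
  let ψ₀ : (H →L[ℂ] H) →ₗ[ℂ] ℂ :=
    { toFun := fun Z => ∑' i, ⟪B (stdONB H i), Z (B (stdONB H i))⟫
      map_add' := fun Z W => by
        rw [← (sm Z).tsum_add (sm W)]
        simp [inner_add_right]
      map_smul' := fun k Z => by
        simp [inner_smul_right, tsum_mul_left] }
  refine ⟨ψ₀.mkContinuous (∑' i, ‖B (stdONB H i)‖ ^ 2) fun Z => ?_, fun Z => ?_, fun Z => ?_,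
    fun Z Y C hC hw => ?_⟩
  · rw [mul_comm, ← tsum_mul_left]
    exact tsum_of_norm_bounded (Summable.mul_left ‖Z‖ h).hasSum (bd Z)
  · have := h.swap (h.mul_right Z)
    simp only [ContinuousLinearMap.mul_def, adjoint_comp, hB'] at this
    simpa [ψ₀, hBi, adjoint_inner_left] using this
  · have := (h.mul_right (ContinuousLinearMap.adjoint Z)).swap h
    simp only [ContinuousLinearMap.mul_def, adjoint_comp, hB', adjoint_adjoint] at this
    simpa [ψ₀, hBi, adjoint_inner_left] using this
  · simp only [LinearMap.mkContinuous_apply, ψ₀, LinearMap.coe_mk, AddHom.coe_mk]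
    refine tendsto_tsum_of_dominated_convergence (bound := fun i => C * ‖B (stdONB H i)‖ ^ 2)
      (Summable.mul_left C h) (fun i => hw _ _) (Eventually.of_forall fun n i => ?_)
    exact (bd _ _).trans (by gcongr; exact hC n)

theorem IsTraceClass.add' {X Y : H →L[ℂ] H} (hX : IsTraceClass X) (hY : IsTraceClass Y) :
    IsTraceClass (X + Y) := by
  obtain ⟨C, hC⟩ := hX
  obtain ⟨D, hD⟩ := hY
  refine ⟨C + D, fun n e f he hf => ?_⟩
  refine le_trans ?_ (add_le_add (hC n e f he hf) (hD n e f he hf))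
  rw [← Finset.sum_add_distrib]
  refine Finset.sum_le_sum fun i _ => ?_
  simpa [inner_add_right] using norm_add_le _ _

theorem IsTraceClass.smul' {X : H →L[ℂ] H} (hX : IsTraceClass X) (k : ℂ) :
    IsTraceClass (k • X) := by
  obtain ⟨C, hC⟩ := hX
  refine ⟨‖k‖ * C, fun n e f he hf => ?_⟩
  refine le_trans ?_ (mul_le_mul_of_nonneg_left (hC n e f he hf) (norm_nonneg k))
  rw [Finset.mul_sum]
  refine Finset.sum_le_sum fun i _ => ?_
  simp [inner_smul_right]

theorem IsTraceClass.adj' {X : H →L[ℂ] H} (hX : IsTraceClass X) :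
    IsTraceClass (ContinuousLinearMap.adjoint X) := by
  obtain ⟨C, hC⟩ := hX
  refine ⟨C, fun n e f he hf => le_trans (le_of_eq ?_) (hC n f e hf he)⟩
  refine Finset.sum_congr rfl fun i _ => ?_
  rw [adjoint_inner_right, norm_inner_symm]

theorem IsTraceClass.bound {X : H →L[ℂ] H} (hX : IsTraceClass X) :
    ∃ C : ℝ, 0 ≤ C ∧ ∀ (Z : H →L[ℂ] H) (n : ℕ) (e : Fin n → H), Orthonormal ℂ e →
      ∑ i, ‖⟪e i, X (Z (e i))⟫‖ ≤ C * ‖Z‖ := by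
  obtain ⟨C, hC⟩ := hX
  have hC0 : 0 ≤ C := by
    simpa using hC 0 Fin.elim0 Fin.elim0 ⟨fun i => i.elim0, fun i => i.elim0⟩
      ⟨fun i => i.elim0, fun i => i.elim0⟩
  refine ⟨2 * C, by positivity, fun Z n e he => ?_⟩
  obtain ⟨u, c, hZ, hc⟩ := CStarAlgebra.exists_sum_four_unitary Z
  have hu : ∀ k, ∑ i, ‖⟪e i, X ((u k : H →L[ℂ] H) (e i))⟫‖ ≤ C := fun k => by
    refine hC n (fun i => (u k : H →L[ℂ] H) (e i)) e ?_ he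
    have := he.comp_linearIsometry (Unitary.linearIsometryEquiv (u k)).toLinearIsometry
    exact this
  calc ∑ i, ‖⟪e i, X (Z (e i))⟫‖ ≤ ∑ i, ∑ k, ‖c k‖ * ‖⟪e i, X ((u k : H →L[ℂ] H) (e i))⟫‖ := by
        refine Finset.sum_le_sum fun i _ => ?_
        conv_lhs => rw [hZ]
        simp only [sum_apply, map_sum, smul_apply, map_smul,
          inner_sum, inner_smul_right]
        exact (norm_sum_le _ _).trans (le_of_eq (by simp))
    _ = ∑ k, ‖c k‖ * ∑ i, ‖⟪e i, X ((u k : H →L[ℂ] H) (e i))⟫‖ := by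
        rw [Finset.sum_comm]; simp [Finset.mul_sum]
    _ ≤ ∑ k : Fin 4, (‖Z‖ / 2) * C := by
        refine Finset.sum_le_sum fun k _ => ?_
        exact mul_le_mul (hc k) (hu k) (by positivity) (by positivity)
    _ = 2 * C * ‖Z‖ := by simp; ring

theorem exists_root {A : H →L[ℂ] H} (hA : IsSelfAdjoint A) (hT : IsTraceClass A) (σ : ℝ)
    (hσ : |σ| = 1) :
    Good (cfc (fun x : ℝ => √(max (σ * x) 0)) A * cfc (fun x : ℝ => √(max (σ * x) 0)) A) := by
  set B : H →L[ℂ] H := cfc (fun x : ℝ => √(max (σ * x) 0)) A with hB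
  have hBsa : IsSelfAdjoint B := cfc_predicate _ A
  have hBB : B * B = cfc (fun x : ℝ => max (σ * x) 0) A := by
    rw [hB, ← cfc_mul _ _ A (by fun_prop) (by fun_prop)]
    congr 1
    funext x
    exact Real.mul_self_sqrt (le_max_right _ _)
  have hB' : ContinuousLinearMap.adjoint B = B := by
    rw [← ContinuousLinearMap.star_eq_adjoint]; exact hBsa
  refine good_sq hBsa ?_
  obtain ⟨C, hC0, hC⟩ := hT.bound
  have key : ∀ (n : ℕ) (e : Fin n → H), Orthonormal ℂ e → ∑ i, ‖B (e i)‖ ^ 2 ≤ C := by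
    intro n e he
    refine le_of_forall_pos_le_add fun ε hε => ?_
    set δ : ℝ := ε / (n + 1) with hδ
    have hδ0 : 0 < δ := by positivity
    let g : ℝ → ℝ := fun x => σ * max 0 (min 1 (σ * x / δ))
    have hg : Continuous g := by fun_prop
    have hgn : ‖cfc g A‖ ≤ 1 := by
      refine norm_cfc_le zero_le_one fun x _ => ?_
      simp only [g, norm_mul, Real.norm_eq_abs, hσ, one_mul]
      rw [abs_of_nonneg (le_max_left _ _)]
      exact max_le zero_le_one (min_le_left _ _)
    have hdiff : ‖B * B - A * cfc g A‖ ≤ δ := by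
      have : A * cfc g A = cfc (fun x => x * g x) A := by
        conv_lhs => rw [← cfc_id ℝ A]
        rw [cfc_id ℝ A, cfc_mul (fun x => x) g A (by fun_prop) (by fun_prop), cfc_id' ℝ A]
      rw [this, hBB, ← cfc_sub _ _ A (by fun_prop) (by fun_prop)]
      refine norm_cfc_le hδ0.le fun x _ => ?_
      have : x * g x = (σ * x) * max 0 (min 1 (σ * x / δ)) := by simp only [g]; ring
      rw [this]
      generalize σ * x = y
      rw [Real.norm_eq_abs, abs_le]
      rcases le_total y 0 with h | h
      · have : y / δ ≤ 0 := div_nonpos_of_nonpos_of_nonneg h hδ0.le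
        rw [max_eq_right h, max_eq_left ((min_le_right _ _).trans this)]
        constructor <;> linarith
      · have h0 : 0 ≤ y / δ := by positivity
        rw [max_eq_left h, max_eq_right (le_min zero_le_one h0)]
        rcases le_total y δ with h' | h'
        · rw [min_eq_right ((div_le_one hδ0).2 h')]
          have : y * (y / δ) ≤ y := mul_le_of_le_one_right h ((div_le_one hδ0).2 h')
          have : 0 ≤ y * (y / δ) := by positivity
          constructor <;> linarith
        · rw [min_eq_left ((one_le_div hδ0).2 h')]
          constructor <;> linarith
    have term : ∀ i, ‖B (e i)‖ ^ 2 ≤ ‖⟪e i, A (cfc g A (e i))⟫‖ + δ := fun i => by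
      have h1 : ⟪e i, (B * B) (e i)⟫ = ((‖B (e i)‖ ^ 2 : ℝ) : ℂ) := by
        have : ⟪e i, B (B (e i))⟫ = ⟪B (e i), B (e i)⟫ := by
          conv_lhs => rw [← adjoint_inner_left, hB']
        rw [mul_apply_eq_comp, this, inner_self_eq_norm_sq_to_K]
        norm_cast
      have h2 : ⟪e i, (B * B) (e i)⟫ = ⟪e i, A (cfc g A (e i))⟫ +
          ⟪e i, (B * B - A * cfc g A) (e i)⟫ := by
        simp [inner_sub_right]
      have h3 : ‖⟪e i, (B * B) (e i)⟫‖ = ‖B (e i)‖ ^ 2 := by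
        rw [h1]; simp
      rw [← h3, h2]
      refine (norm_add_le _ _).trans (add_le_add le_rfl ?_)
      refine (norm_inner_le_norm _ _).trans ?_
      rw [he.1 i, one_mul]
      refine ((B * B - A * cfc g A).le_opNorm _).trans ?_
      rw [he.1 i, mul_one]
      exact hdiff
    calc ∑ i, ‖B (e i)‖ ^ 2 ≤ ∑ i, (‖⟪e i, A (cfc g A (e i))⟫‖ + δ) :=
          Finset.sum_le_sum fun i _ => term i
      _ = ∑ i, ‖⟪e i, A (cfc g A (e i))⟫‖ + n * δ := by simp [Finset.sum_add_distrib]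
      _ ≤ C + ε := by
        refine add_le_add ((hC (cfc g A) n e he).trans (mul_le_of_le_one_right hC0 hgn)) ?_
        rw [hδ, mul_div_assoc', div_le_iff₀ (by positivity)]
        nlinarith
  refine summable_of_sum_le (c := C) (fun _ => by positivity) fun s => ?_
  have := key s.card (fun k => stdONB H (s.equivFin.symm k))
    ((stdONB H).orthonormal.comp _ (Subtype.val_injective.comp s.equivFin.symm.injective))
  rw [s.equivFin.symm.sum_comp (fun k : s => ‖B (stdONB H k)‖ ^ 2)] at this
  rwa [Finset.sum_coe_sort s (fun k => ‖B (stdONB H k)‖ ^ 2)] at this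

theorem good_of_sa {A : H →L[ℂ] H} (hA : IsSelfAdjoint A) (hT : IsTraceClass A) : Good A := by
  have h1 := exists_root hA hT 1 (by simp)
  have h2 := exists_root hA hT (-1) (by simp)
  have h3 := h1.add (h2.smul (-1))
  convert h3 using 1
  rw [← cfc_mul _ _ A (by fun_prop) (by fun_prop), ← cfc_mul _ _ A (by fun_prop) (by fun_prop)]
  rw [neg_one_smul, ← sub_eq_add_neg, ← cfc_sub _ _ A (by fun_prop) (by fun_prop)]
  conv_lhs => rw [← cfc_id' ℝ A]
  congr 1
  funext x
  rw [Real.mul_self_sqrt (le_max_right _ _), Real.mul_self_sqrt (le_max_right _ _)]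
  rcases le_total x 0 with h | h
  · rw [max_eq_right (by linarith), max_eq_left (by linarith)]; ring
  · rw [max_eq_left (by linarith), max_eq_right (by linarith)]; ring

theorem good_of_tc {X : H →L[ℂ] H} (hX : IsTraceClass X) : Good X := by
  have hs : IsTraceClass (star X) := hX.adj'
  have h1 : Good ((2⁻¹ : ℂ) • (X + star X)) := by
    refine good_of_sa ?_ ((hX.add' hs).smul' _)
    simp [IsSelfAdjoint, add_comm]
  have h2 : Good ((2⁻¹ * Complex.I : ℂ) • (X + (-1 : ℂ) • star X)) := by
    refine good_of_sa ?_ ((hX.add' (hs.smul' _)).smul' _)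
    simp only [IsSelfAdjoint, star_smul, star_add, star_mul, star_star]
    simp
    module
  have h3 := h1.add (h2.smul (-Complex.I))
  convert h3 using 1
  have : (-Complex.I) * (2⁻¹ * Complex.I) = 2⁻¹ := by
    rw [mul_left_comm, neg_mul, Complex.I_mul_I]; simp
  rw [smul_smul, this]
  module


theorem tendsto_inner_of_dense {D : ℕ → H} (hD : DenseRange D) {Z : ℕ → (H →L[ℂ] H)}
    {Y : H →L[ℂ] H} {C : ℝ} (hZ : ∀ n, ‖Z n‖ ≤ C) (hY : ‖Y‖ ≤ C)
    (h : ∀ i j, Tendsto (fun n => ⟪D i, Z n (D j)⟫) atTop (𝓝 ⟪D i, Y (D j)⟫)) (x y : H) :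
    Tendsto (fun n => ⟪x, Z n y⟫) atTop (𝓝 ⟪x, Y y⟫) := by
  have hC : 0 ≤ C := (norm_nonneg _).trans hY
  have bd : ∀ W : H →L[ℂ] H, ‖W‖ ≤ C → ∀ i j, ‖⟪x, W y⟫ - ⟪D i, W (D j)⟫‖ ≤
      ‖x - D i‖ * (C * ‖y‖) + ‖D i‖ * (C * ‖y - D j‖) := by
    intro W hW i j
    have e1 : ⟪x, W y⟫ - ⟪D i, W (D j)⟫ = ⟪x - D i, W y⟫ + ⟪D i, W (y - D j)⟫ := by
      simp only [map_sub, inner_sub_left, inner_sub_right]; ring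
    rw [e1]
    refine (norm_add_le _ _).trans (add_le_add ?_ ?_)
    · exact (norm_inner_le_norm _ _).trans
        (mul_le_mul_of_nonneg_left (W.le_of_opNorm_le hW _) (norm_nonneg _))
    · exact (norm_inner_le_norm _ _).trans
        (mul_le_mul_of_nonneg_left (W.le_of_opNorm_le hW _) (norm_nonneg _))
  rw [Metric.tendsto_atTop]
  intro ε hε
  obtain ⟨i, hi⟩ : ∃ i, ‖x - D i‖ * (C * ‖y‖) < ε / 6 := by
    have hc : Continuous fun z : H => ‖x - z‖ * (C * ‖y‖) := by fun_prop
    have ho := isOpen_lt hc (continuous_const (y := ε / 6))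
    exact hD.exists_mem_open ho ⟨x, by simpa using (by positivity : 0 < ε / 6)⟩
  obtain ⟨j, hj⟩ : ∃ j, ‖D i‖ * (C * ‖y - D j‖) < ε / 6 := by
    have hc : Continuous fun z : H => ‖D i‖ * (C * ‖y - z‖) := by fun_prop
    have ho := isOpen_lt hc (continuous_const (y := ε / 6))
    exact hD.exists_mem_open ho ⟨y, by simpa using (by positivity : 0 < ε / 6)⟩
  obtain ⟨M, hM⟩ := (Metric.tendsto_atTop.mp (h i j)) (ε / 3) (by positivity)
  refine ⟨M, fun n hn => ?_⟩
  have h1 := bd (Z n) (hZ n) i j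
  have h2 := bd Y hY i j
  have h3 := hM n hn
  rw [dist_eq_norm] at h3 ⊢
  have e2 : ⟪x, Z n y⟫ - ⟪x, Y y⟫ = (⟪x, Z n y⟫ - ⟪D i, Z n (D j)⟫) +
      (⟪D i, Z n (D j)⟫ - ⟪D i, Y (D j)⟫) - (⟪x, Y y⟫ - ⟪D i, Y (D j)⟫) := by ring
  rw [e2]
  have h4 := norm_sub_le ((⟪x, Z n y⟫ - ⟪D i, Z n (D j)⟫) +
      (⟪D i, Z n (D j)⟫ - ⟪D i, Y (D j)⟫)) (⟪x, Y y⟫ - ⟪D i, Y (D j)⟫)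
  have h5 := norm_add_le (⟪x, Z n y⟫ - ⟪D i, Z n (D j)⟫) (⟪D i, Z n (D j)⟫ - ⟪D i, Y (D j)⟫)
  linarith

/-- Any set of operators contains a countable subset that is sequentially dense for bounded
weak operator convergence. -/
theorem exists_countable_seq_dense [TopologicalSpace.SeparableSpace H] (S : Set (H →L[ℂ] H)) :
    ∃ T : Set (H →L[ℂ] H), T.Countable ∧ T ⊆ S ∧ ∀ Y ∈ S, ∃ (Z : ℕ → (H →L[ℂ] H)) (C : ℝ),
      (∀ n, Z n ∈ T) ∧ (∀ n, ‖Z n‖ ≤ C) ∧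
      ∀ x y, Tendsto (fun n => ⟪x, Z n y⟫) atTop (𝓝 ⟪x, Y y⟫) := by
  let D : ℕ → H := TopologicalSpace.denseSeq H
  have hD : DenseRange D := TopologicalSpace.denseRange_denseSeq H
  let Φ : (H →L[ℂ] H) → (ℕ × ℕ → ℂ) := fun Y p => ⟪D p.1, Y (D p.2)⟫
  have hn : ∀ n : ℕ, ∃ T : Set (H →L[ℂ] H), T.Countable ∧ T ⊆ S ∩ {Y | ‖Y‖ ≤ n} ∧
      ∀ Y ∈ S ∩ {Y | ‖Y‖ ≤ n}, Φ Y ∈ closure (Φ '' T) := by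
    intro n
    obtain ⟨T, hT, hTc, hTd⟩ := (TopologicalSpace.IsSeparable.of_separableSpace
      (Φ '' (S ∩ {Y | ‖Y‖ ≤ n}))).exists_countable_dense_subset
    have hT2 : ∀ t : ℕ × ℕ → ℂ, t ∈ T → ∃ Y, Y ∈ S ∩ {Y | ‖Y‖ ≤ n} ∧ Φ Y = t := fun t ht => hT ht
    choose! g hg hgΦ using hT2
    refine ⟨g '' T, hTc.image g, ?_, fun Y hY => ?_⟩
    · rintro _ ⟨t, ht, rfl⟩
      exact hg t ht
    · refine closure_mono ?_ (hTd ⟨Y, hY, rfl⟩)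
      intro t ht
      exact ⟨g t, ⟨t, ht, rfl⟩, hgΦ t ht⟩
  choose T hTc hTs hTd using hn
  refine ⟨⋃ n, T n, Set.countable_iUnion hTc, Set.iUnion_subset fun n => (hTs n).trans
    Set.inter_subset_left, fun Y hY => ?_⟩
  obtain ⟨m, hm⟩ := exists_nat_ge ‖Y‖
  obtain ⟨w, hw, hwl⟩ := mem_closure_iff_seq_limit.mp (hTd m Y ⟨hY, hm⟩)
  choose Z hZ hZw using hw
  refine ⟨Z, m, fun n => Set.mem_iUnion.2 ⟨m, hZ n⟩, fun n => (hTs m (hZ n)).2, ?_⟩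
  refine tendsto_inner_of_dense hD (fun n => (hTs m (hZ n)).2) hm fun i j => ?_
  have := (tendsto_pi_nhds.mp hwl) (i, j)
  refine this.congr fun n => ?_
  rw [← hZw n]

theorem Tr_star (W : H →L[ℂ] H) : Tr (star W) = star (Tr W) := by
  unfold Tr
  rw [tsum_star]
  congr 1
  funext i
  rw [ContinuousLinearMap.star_eq_adjoint, adjoint_inner_right]
  exact (inner_conj_symm _ _).symm

theorem exists_decomposition (A : Submodule ℂ (H →L[ℂ] H)) (hA1 : (1 : H →L[ℂ] H) ∈ A)
    (hAs : ∀ Z ∈ A, star Z ∈ A) (hAc : IsClosed (A : Set (H →L[ℂ] H)))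
    (T : Set (H →L[ℂ] H)) (hTc : T.Countable) (hTA : T ⊆ A) :
    ∃ F : ℕ → (H →L[ℂ] H), (∀ k, (F k).IsPositive) ∧ (∀ k, F k ∈ A) ∧ HasSum F 1 ∧
      T ⊆ Submodule.span ℂ (Set.range F) := by
  let p : (H →L[ℂ] H) → (H →L[ℂ] H) := fun a => a + (‖a‖ : ℝ) • 1
  let Q : Set (H →L[ℂ] H) := insert 1 ((fun Z => p (realPart Z : H →L[ℂ] H)) '' T ∪
    (fun Z => p (imaginaryPart Z : H →L[ℂ] H)) '' T)
  have hQc : Q.Countable := ((hTc.image _).union (hTc.image _)).insert _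
  have hp0 : ∀ a : H →L[ℂ] H, IsSelfAdjoint a → 0 ≤ p a := fun a ha => by
    have := ha.neg_algebraMap_norm_le_self
    rw [Algebra.algebraMap_eq_smul_one] at this
    exact neg_le_iff_add_nonneg'.mp this |>.trans_eq (add_comm _ _)
  have hpA : ∀ a ∈ A, p a ∈ A := fun a ha => A.add_mem ha (A.smul_of_tower_mem _ hA1)
  have hre : ∀ Z ∈ A, (realPart Z : H →L[ℂ] H) ∈ A := fun Z hZ => by
    rw [realPart_apply_coe]
    exact A.smul_of_tower_mem _ (A.add_mem hZ (hAs Z hZ))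
  have him : ∀ Z ∈ A, (imaginaryPart Z : H →L[ℂ] H) ∈ A := fun Z hZ => by
    rw [imaginaryPart_apply_coe]
    exact A.smul_mem _ (A.smul_of_tower_mem _ (A.sub_mem hZ (hAs Z hZ)))
  have hQ0 : ∀ q ∈ Q, 0 ≤ q := by
    rintro q (rfl | ⟨Z, -, rfl⟩ | ⟨Z, -, rfl⟩)
    · exact zero_le_one
    · exact hp0 _ (realPart Z).2
    · exact hp0 _ (imaginaryPart Z).2
  have hQA : ∀ q ∈ Q, q ∈ A := by
    rintro q (rfl | ⟨Z, hZ, rfl⟩ | ⟨Z, hZ, rfl⟩)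
    · exact hA1
    · exact hpA _ (hre Z (hTA hZ))
    · exact hpA _ (him Z (hTA hZ))
  obtain ⟨P, hP⟩ := hQc.exists_eq_range ⟨1, Set.mem_insert _ _⟩
  have hPQ : ∀ k, P k ∈ Q := fun k => by rw [hP]; exact ⟨k, rfl⟩
  let c : ℕ → ℝ := fun k => (1 / 2) / 2 ^ k / (1 + ‖P k‖)
  have hc : ∀ k, 0 < c k := fun k => by positivity
  let G : ℕ → (H →L[ℂ] H) := fun k => c k • P k
  have hG0 : ∀ k, 0 ≤ G k := fun k => smul_nonneg (hc k).le (hQ0 _ (hPQ k))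
  have hGA : ∀ k, G k ∈ A := fun k => A.smul_of_tower_mem _ (hQA _ (hPQ k))
  have hGn : ∀ k, ‖G k‖ ≤ (1 / 2) / 2 ^ k := fun k => by
    simp only [G, norm_smul, Real.norm_eq_abs, abs_of_pos (hc k), c]
    rw [div_mul_eq_mul_div, div_le_iff₀ (by positivity)]
    gcongr
    linarith
  have hsum : HasSum (fun k : ℕ => (1 / 2 : ℝ) / 2 ^ k) 1 := by
    simpa using hasSum_geometric_two' (1 : ℝ)
  have hGs : Summable G := Summable.of_norm_bounded hsum.summable hGn
  have hS1 : ‖∑' k, G k‖ ≤ 1 := tsum_of_norm_bounded hsum hGn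
  have hSsa : IsSelfAdjoint (∑' k, G k) := by
    rw [IsSelfAdjoint, tsum_star]
    congr 1
    funext k
    exact (IsSelfAdjoint.of_nonneg (hG0 k))
  have hSA : ∑' k, G k ∈ A :=
    hAc.mem_of_tendsto hGs.hasSum (Eventually.of_forall fun s => A.sum_mem fun k _ => hGA k)
  have hS : 0 ≤ 1 - ∑' k, G k := by
    rw [sub_nonneg]
    refine hSsa.le_algebraMap_norm_self.trans ?_
    rw [Algebra.algebraMap_eq_smul_one]
    have : 0 ≤ (1 - ‖∑' k, G k‖) • (1 : H →L[ℂ] H) :=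
      smul_nonneg (sub_nonneg.2 hS1) zero_le_one
    rw [sub_smul, one_smul, sub_nonneg] at this
    exact this
  let F : ℕ → (H →L[ℂ] H) := fun k => Nat.casesOn k (1 - ∑' k, G k) G
  have hsp : ∀ q ∈ Q, q ∈ Submodule.span ℂ (Set.range F) := fun q hq => by
    rw [hP] at hq
    obtain ⟨k, rfl⟩ := hq
    have h1 : F (k + 1) ∈ Submodule.span ℂ (Set.range F) := Submodule.subset_span ⟨k + 1, rfl⟩
    have h2 : P k = (c k)⁻¹ • F (k + 1) := by
      change P k = (c k)⁻¹ • c k • P k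
      rw [smul_smul, inv_mul_cancel₀ (hc k).ne', one_smul]
    rw [h2]
    exact Submodule.smul_of_tower_mem _ _ h1
  have hsp1 := hsp 1 (Set.mem_insert _ _)
  have hspp : ∀ a, p a ∈ Submodule.span ℂ (Set.range F) → a ∈ Submodule.span ℂ (Set.range F) :=
    fun a ha => by
      have : a = p a - (‖a‖ : ℝ) • (1 : H →L[ℂ] H) := by simp [p]
      rw [this]
      exact Submodule.sub_mem _ ha (Submodule.smul_of_tower_mem _ _ hsp1)
  refine ⟨F, ?_, ?_, ?_, ?_⟩
  · rintro (_ | k)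
    · exact (ContinuousLinearMap.nonneg_iff_isPositive _).1 hS
    · exact (ContinuousLinearMap.nonneg_iff_isPositive _).1 (hG0 k)
  · rintro (_ | k)
    · exact A.sub_mem hA1 hSA
    · exact hGA k
  · rw [← hasSum_nat_add_iff' 1]
    have : (1 : H →L[ℂ] H) - ∑ i ∈ Finset.range 1, F i = ∑' k, G k := by
      simp [F]
    rw [this]
    exact hGs.hasSum
  · intro Z hZ
    rw [← realPart_add_I_smul_imaginaryPart Z]
    refine Submodule.add_mem _ ?_ (Submodule.smul_mem _ _ ?_)
    · exact hspp _ (hsp _ (Or.inr (Or.inl ⟨Z, hZ, rfl⟩)))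
    · exact hspp _ (hsp _ (Or.inr (Or.inr ⟨Z, hZ, rfl⟩)))

end Helpers

/-- For a trace-norm-closed self-adjoint subspace `N` of trace-zero
trace-class operators on a separable infinite-dimensional Hilbert space, there is a
sequence of positive operators `Fₖ` in the annihilator `N^⊥` with `∑ₖ Fₖ = I`
(converging in operator norm) whose linear span is weak*-dense in `N^⊥`. -/
theorem annihilator_weakStar_dense_positive_decomposition
    {H : Type*} [NormedAddCommGroup H] [InnerProductSpace ℂ H] [CompleteSpace H]
    [TopologicalSpace.SeparableSpace H] (hinf : ¬ FiniteDimensional ℂ H)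
    (N : Submodule ℂ (H →L[ℂ] H))
    (hN_tc : ∀ X ∈ N, IsTraceClass X)
    (hN_tr0 : ∀ X ∈ N, Tr X = 0)
    (hN_sa : ∀ X ∈ N, ContinuousLinearMap.adjoint X ∈ N)
    (hN_closed : ∀ X : H →L[ℂ] H, IsTraceClass X →
      (∀ ε : ℝ, 0 < ε → ∃ Y ∈ N, traceNorm (X - Y) < ε) → X ∈ N) :
    ∃ F : ℕ → (H →L[ℂ] H),
      (∀ k, (F k).IsPositive) ∧
      (∀ k, ∀ X ∈ N, Tr (X * F k) = 0) ∧
      HasSum F 1 ∧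
      ∀ Y : H →L[ℂ] H, (∀ X ∈ N, Tr (X * Y) = 0) →
        Y ∈ @closure _ (weakStarTopology H)
          ((Submodule.span ℂ (Set.range F) : Submodule ℂ (H →L[ℂ] H)) :
            Set (H →L[ℂ] H)) := by
  have hψ : ∀ X : H →L[ℂ] H, IsTraceClass X → ∃ ψ : (H →L[ℂ] H) →L[ℂ] ℂ,
      (∀ Z, Tr (X * Z) = ψ Z) ∧ (∀ Z, Tr (Z * X) = ψ Z) ∧
      (∀ (Z : ℕ → (H →L[ℂ] H)) (Y : H →L[ℂ] H) (C : ℝ), (∀ n, ‖Z n‖ ≤ C) →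
        (∀ x y, Tendsto (fun n => ⟪x, Z n y⟫) atTop (𝓝 ⟪x, Y y⟫)) →
        Tendsto (fun n => ψ (Z n)) atTop (𝓝 (ψ Y))) := by
    intro X hX
    obtain ⟨ψ, h1, h2, h3⟩ := good_of_tc hX
    exact ⟨ψ, fun Z => (h1 Z).tsum_eq, fun Z => (h2 Z).tsum_eq, h3⟩
  choose! ψ hψ1 hψ2 hψ3 using hψ
  let A : Submodule ℂ (H →L[ℂ] H) := ⨅ X : N, LinearMap.ker (ψ (X : H →L[ℂ] H)).toLinearMap
  have hA : ∀ Y, Y ∈ A ↔ ∀ X ∈ N, Tr (X * Y) = 0 := by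
    intro Y
    simp only [A, Submodule.mem_iInf, LinearMap.mem_ker, Subtype.forall]
    refine forall_congr' fun X => forall_congr' fun hX => ?_
    rw [hψ1 X (hN_tc X hX)]
    rfl
  have hAc : IsClosed (A : Set (H →L[ℂ] H)) := by
    simp only [A, Submodule.coe_iInf]
    exact isClosed_iInter fun X => (ψ (X : H →L[ℂ] H)).isClosed_ker
  have hA1 : (1 : H →L[ℂ] H) ∈ A := by
    rw [hA]
    intro X hX
    rw [mul_one]
    exact hN_tr0 X hX
  have hAs : ∀ Z ∈ A, star Z ∈ A := by
    intro Z hZ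
    rw [hA] at hZ ⊢
    intro X hX
    have hX' : star X ∈ N := hN_sa X hX
    have h1 := hZ _ hX'
    rw [hψ1 _ (hN_tc _ hX'), ← hψ2 _ (hN_tc _ hX')] at h1
    have h2 := Tr_star (Z * star X)
    rw [h1, star_mul, star_star, star_zero] at h2
    exact h2
  obtain ⟨T, hTc, hTA, hTd⟩ := exists_countable_seq_dense (A : Set (H →L[ℂ] H))
  obtain ⟨F, hF0, hFA, hF1, hFT⟩ := exists_decomposition A hA1 hAs hAc T hTc hTA
  refine ⟨F, hF0, fun k => (hA _).1 (hFA k), hF1, fun Y hY => ?_⟩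
  obtain ⟨Z, C, hZT, hZC, hZ⟩ := hTd Y ((hA Y).2 hY)
  refine @mem_closure_of_tendsto _ (weakStarTopology H) _ _ _ Z atTop _ ?_
    (Eventually.of_forall fun n => hFT (hZT n))
  unfold weakStarTopology
  rw [nhds_induced, tendsto_comap_iff, tendsto_pi_nhds]
  rintro ⟨X, hX⟩
  simp only [Function.comp_def, hψ1 X hX]
  exact hψ3 X hX Z Y C hZC hZ

end
end

section
/- Let H be a complex separable Hilbert space and let Φ: T(H) → T(H) be a quantum channel (completely positive and trace-preserving) with dual map Φ*: B(H) → B(H). If A belongs to the multiplicative domain M_Φ of Φ, then (Φ* ∘ Φ)(A) = A. -/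
noncomputable section

open scoped ComplexInnerProductSpace
open ContinuousLinearMap Filter Topology

theorem aux_rankOne_apply {H : Type*} [NormedAddCommGroup H] [InnerProductSpace ℂ H]
    (u v x : H) : rankOne u v x = ⟪v, x⟫ • u := by
  simp [rankOne]

theorem aux_rankOne_tc {H : Type*} [NormedAddCommGroup H] [InnerProductSpace ℂ H]
    (u v : H) : IsTraceClass (rankOne u v) := by
  refine ⟨‖u‖ ^ 2 + ‖v‖ ^ 2, fun n e f he hf => ?_⟩
  have h1 := hf.sum_inner_products_le (x := u) (s := Finset.univ)
  have h2 := he.sum_inner_products_le (x := v) (s := Finset.univ)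
  refine le_trans ?_ (add_le_add h1 h2)
  rw [← Finset.sum_add_distrib]
  refine Finset.sum_le_sum fun i _ => ?_
  rw [aux_rankOne_apply, inner_smul_right, norm_mul, norm_inner_symm v (e i)]
  nlinarith [sq_nonneg (‖⟪e i, v⟫‖ - ‖⟪f i, u⟫‖), sq_nonneg (‖⟪e i, v⟫‖ + ‖⟪f i, u⟫‖)]

theorem aux_Tr_rankOne {H : Type*} [NormedAddCommGroup H] [InnerProductSpace ℂ H]
    [CompleteSpace H] (u v : H) : Tr (rankOne u v) = ⟪v, u⟫ := by
  rw [Tr, ← (stdONB H).tsum_inner_mul_inner v u]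
  refine tsum_congr fun i => ?_
  rw [aux_rankOne_apply, inner_smul_right]

theorem aux_rankOne_mul {H : Type*} [NormedAddCommGroup H] [InnerProductSpace ℂ H]
    [CompleteSpace H] (u v : H) (B : H →L[ℂ] H) :
    rankOne u v * B = rankOne u (ContinuousLinearMap.adjoint B v) := by
  ext x
  rw [ContinuousLinearMap.mul_apply, aux_rankOne_apply, aux_rankOne_apply,
    ContinuousLinearMap.adjoint_inner_left]

/-- If `A` belongs to the multiplicative domain of a quantum channel
`Φ`, then `(Φ* ∘ Φ)(A) = A`, where `Φ*` is the dual map of `Φ`. -/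
theorem multiplicative_domain_fixed_by_dual_comp
    {H : Type*} [NormedAddCommGroup H] [InnerProductSpace ℂ H] [CompleteSpace H]
    [TopologicalSpace.SeparableSpace H]
    (Φ : (H →L[ℂ] H) →ₗ[ℂ] (H →L[ℂ] H)) (hΦ : IsChannel Φ)
    (Φs : (H →L[ℂ] H) →ₗ[ℂ] (H →L[ℂ] H))
    (hdual : ∀ (X Y : H →L[ℂ] H), IsTraceClass X → Tr (Φ X * Y) = Tr (X * Φs Y))
    (A : H →L[ℂ] H) (hAtc : IsTraceClass A)
    (hAmem : ∀ X : H →L[ℂ] H, IsTraceClass X →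
      Φ (A * X) = Φ A * Φ X ∧ Φ (X * A) = Φ X * Φ A) :
    Φs (Φ A) = A := by
  ext u
  refine ext_inner_left ℂ fun v => ?_
  have key : ∀ B : H →L[ℂ] H, Tr (rankOne u v * B) = ⟪v, B u⟫ := fun B => by
    rw [aux_rankOne_mul, aux_Tr_rankOne, ContinuousLinearMap.adjoint_inner_left]
  have htc : IsTraceClass (rankOne u v * A) := by
    rw [aux_rankOne_mul]; exact aux_rankOne_tc _ _
  rw [← key, ← key, ← hdual _ _ (aux_rankOne_tc u v),
    ← (hAmem _ (aux_rankOne_tc u v)).2, hΦ.tracePreserving _ htc]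

end
end
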